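/- arXiv:2404.02005 — 2 statements merged into one kernel-verified Lean document; each statement's English description precedes it below -/
import Mathlib

section
/- Let (R, m) be a 2-dimensional analytically unramified Gorenstein local ring with integral closure R̄ and conductor ideal 𝔠. Then the homological annihilator of R̄/R equals its annihilator: Hann_R(R̄/R) := ∏_{i=0}^{2} Ann_R(Ext^i_R(R̄/R, R)) = Ann_R(R̄/R) = 𝔠. -/
open CategoryTheory IsLocalRing

set_option synthInstance.maxHeartbeats 1000000
set_option maxHeartbeats 1000000

noncomputable section

/-- The integral closure `R̄` of `R` in its total ring of fractions, viewed as a type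
(with its canonical `R`-algebra and `R`-module structures). -/
abbrev IntClosure (R : Type) [CommRing R] : Type :=
  ↥(integralClosure R (FractionRing R))

/-- The quotient `R`-module `R̄/R`. -/
abbrev IntClosureQuot (R : Type) [CommRing R] : Type :=
  IntClosure R ⧸ LinearMap.range (Algebra.linearMap R (IntClosure R))

/-- The conductor ideal `𝔠 = Ann_R(R̄/R) = {r : R | r • R̄ ⊆ R}`. -/
def conductorIdeal (R : Type) [CommRing R] : Ideal R :=
  Module.annihilator R (IntClosureQuot R)

/-- A local ring `R` is analytically unramified if its `m`-adic completion is reduced. -/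
def AnalyticallyUnramified (R : Type) [CommRing R] [IsLocalRing R] : Prop :=
  IsReduced (AdicCompletion (maximalIdeal R) R)

/-- `R` is normal: it is reduced and equal to its integral closure `R̄` in its total
ring of fractions. -/
def IsNormalRing (R : Type) [CommRing R] : Prop :=
  IsReduced R ∧ integralClosure R (FractionRing R) = ⊥

/-- `Ext^i_R(M, N)` as a type. -/
abbrev ExtMod (R : Type) [CommRing R] (M : Type) [AddCommGroup M] [Module R M]
    (N : Type) [AddCommGroup N] [Module R N] (i : ℕ) : Type :=
  ↥(((Ext R (ModuleCat.{0} R) i).obj (Opposite.op (ModuleCat.of R M))).obj (ModuleCat.of R N))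

/-- `M` has finite projective dimension over `R`:
`Ext^i_R(M, -)` vanishes for all `i` bigger than some `n`. -/
def HasFiniteProjDim (R : Type) [CommRing R] (M : Type) [AddCommGroup M] [Module R M] : Prop :=
  ∃ n : ℕ, ∀ (N : ModuleCat.{0} R) (i : ℕ), n < i →
    Subsingleton ↥(((Ext R (ModuleCat.{0} R) i).obj (Opposite.op (ModuleCat.of R M))).obj N)

/-- `M` has finite injective dimension over `R`:
`Ext^i_R(-, M)` vanishes for all `i` bigger than some `n`. -/
def HasFiniteInjDim (R : Type) [CommRing R] (M : Type) [AddCommGroup M] [Module R M] : Prop :=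
  ∃ n : ℕ, ∀ (N : ModuleCat.{0} R) (i : ℕ), n < i →
    Subsingleton ↥(((Ext R (ModuleCat.{0} R) i).obj (Opposite.op N)).obj (ModuleCat.of R M))

/-- The depth of an `R`-module `M` over a local ring `(R, m)`: the least `i` such that
`Ext^i_R(R/m, M) ≠ 0` (`⊤` if there is no such `i`), valued in `WithBot (WithTop ℕ)`
for easy comparison with `ringKrullDim`. -/
def moduleDepth (R : Type) [CommRing R] [IsLocalRing R]
    (M : Type) [AddCommGroup M] [Module R M] : WithBot (WithTop ℕ) :=
  sInf { n : WithBot (WithTop ℕ) |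
    ∃ i : ℕ, n = (i : ℕ) ∧ Nontrivial (ExtMod R (ResidueField R) M i) }

/-- A Noetherian local ring is Gorenstein if it has finite injective dimension
as a module over itself. -/
def IsGorensteinLocal (R : Type) [CommRing R] [IsLocalRing R] : Prop :=
  IsNoetherianRing R ∧ HasFiniteInjDim R R

/-- A Noetherian local ring is Cohen–Macaulay if its depth equals its Krull dimension. -/
def IsCohenMacaulayLocal (R : Type) [CommRing R] [IsLocalRing R] : Prop :=
  IsNoetherianRing R ∧ moduleDepth R R = ringKrullDim R

/-- A ring is Cohen–Macaulay if it is Noetherian and all its localizations at primes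
are Cohen–Macaulay local rings. -/
def IsCohenMacaulayRing (A : Type) [CommRing A] : Prop :=
  IsNoetherianRing A ∧ ∀ (p : Ideal A) [p.IsPrime],
    moduleDepth (Localization.AtPrime p) (Localization.AtPrime p) =
      ringKrullDim (Localization.AtPrime p)

/-- Serre's condition `(S2)`: `depth (R_p) ≥ min {2, height p}` for every prime `p`
(`height p` being the dimension of `R_p`). -/
def SerreS2 (R : Type) [CommRing R] : Prop :=
  ∀ (p : Ideal R) [p.IsPrime],
    min 2 (ringKrullDim (Localization.AtPrime p)) ≤
      moduleDepth (Localization.AtPrime p) (Localization.AtPrime p)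

/-- A Noetherian local ring is regular if its maximal ideal can be generated by
`dim R` elements. -/
def IsRegularLocal (A : Type) [CommRing A] [IsLocalRing A] : Prop :=
  IsNoetherianRing A ∧ ∃ s : Finset A, Ideal.span (s : Set A) = maximalIdeal A ∧
    (s.card : WithBot (WithTop ℕ)) = ringKrullDim A

/-- Serre's condition `(R1)`: `R_p` is regular for every prime `p` of height at most `1`. -/
def SerreR1 (R : Type) [CommRing R] : Prop :=
  ∀ (p : Ideal R) [p.IsPrime], ringKrullDim (Localization.AtPrime p) ≤ 1 →
    IsRegularLocal (Localization.AtPrime p)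

/-- The `i`-th local cohomology `H^i_m(M)` of `M` with support in the maximal ideal,
as a type. -/
abbrev localCohMod (R : Type) [CommRing R] [IsLocalRing R] (i : ℕ)
    (M : Type) [AddCommGroup M] [Module R M] : Type :=
  ↥((localCohomology (maximalIdeal R) i).obj (ModuleCat.of R M))

/-- `x : Fin d → R` is a system of parameters for the local ring `(R, m)`:
`d = dim R`, all `x i` lie in `m`, and the ideal they generate is `m`-primary
(its radical is `m`). -/
def IsSystemOfParameters (R : Type) [CommRing R] [IsLocalRing R] {d : ℕ}
    (x : Fin d → R) : Prop :=
  (d : WithBot (WithTop ℕ)) = ringKrullDim R ∧ (∀ i, x i ∈ maximalIdeal R) ∧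
    (Ideal.span (Set.range x)).radical = maximalIdeal R

/-- `E` is an injective hull of the residue field of the local ring `R`:
`E` is injective and contains a copy of `R/m` as an essential submodule. -/
def IsInjectiveHullOfResidueField (R : Type) [CommRing R] [IsLocalRing R]
    (E : Type) [AddCommGroup E] [Module R E] : Prop :=
  Module.Injective R E ∧ ∃ f : ResidueField R →ₗ[R] E, Function.Injective f ∧
    ∀ N : Submodule R E, N ≠ ⊥ → N ⊓ LinearMap.range f ≠ ⊥

/-!
Put `Q = R̄ / R`. Every element of `Q` is killed by a nonzerodivisor, so `Hom(Q, R) = 0`. An element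
`r` kills `Ext¹(Q, R)` only if `r : R → R` extends to an `R`-linear map `R̄ → R`; such an extension
can only be multiplication by `r`, so `r` lies in the conductor. Finally, since
`Ext¹(R, R) = 0`, the vanishing of `Ext²(Q, R)` follows from that of `Ext²(R̄, R)`, and the latter
is a finitely generated module on which a nonzerodivisor `x` of the maximal ideal acts
surjectively, because `Ext³(R̄ / xR̄, R) = 0`. So the three annihilators are `R`, `𝔠`, `R`.

Two inputs remain. Finite injective dimension yields a regular sequence `x, w` of length two and
lowers the degree of vanishing of `Ext(-, R)` to three: a vanishing top `Ext(M, R)` with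
`depth M = 0` passes to the residue field, and from there to every finitely generated module.
For the finiteness of `R̄`, the sequence `x, w` is also regular on `R̄`, and two applications of the
Krull–Akizuki argument show that `R̄ / (x, w)R̄` is finitely generated. A finite submodule then
generates `R̄` modulo the maximal ideal. Since the completion `R̂` is reduced, `R̂ ⊗ R̄` is
separated, so it is generated over `R̂` by that submodule, and faithful flatness descends the
finiteness to `R̄`.
-/

universe u v w

section ExtComparison

variable {R : Type u} [CommRing R]

theorem mem_annihilator_homology_iff (S : ShortComplex (ModuleCat.{v} R)) (r : R) :
    r ∈ Module.annihilator R S.homology ↔ ∀ x, S.g x = 0 → ∃ y, S.f y = r • x := by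
  rw [S.moduleCatHomologyIso.toLinearEquiv.annihilator_eq, Module.mem_annihilator]
  refine ⟨fun h x hx ↦ ?_, fun h ↦ ?_⟩
  · obtain ⟨y, hy⟩ := (Submodule.Quotient.mk_eq_zero _).mp (h (Submodule.Quotient.mk ⟨x, hx⟩))
    exact ⟨y, congrArg Subtype.val hy⟩
  · rintro ⟨x, hx⟩
    obtain ⟨y, hy⟩ := h x hx
    exact (Submodule.Quotient.mk_eq_zero _).mpr ⟨y, Subtype.ext hy⟩

theorem mem_annihilator_abelianExt_succ_iff {X Y : ModuleCat.{u} R} (P : ProjectiveResolution X)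
    (n : ℕ) (r : R) :
    r ∈ Module.annihilator R (Abelian.Ext X Y (n + 1)) ↔
      ∀ f : P.complex.X (n + 1) ⟶ Y, P.complex.d (n + 2) (n + 1) ≫ f = 0 →
        ∃ g : P.complex.X n ⟶ Y, P.complex.d (n + 1) n ≫ g = r • f := by
  have smul_extMk_eq_zero_iff (f : P.complex.X (n + 1) ⟶ Y)
      (hf : P.complex.d (n + 2) (n + 1) ≫ f = 0) :
      r • P.extMk f (n + 2) rfl hf = 0 ↔
        ∃ g : P.complex.X n ⟶ Y, P.complex.d (n + 1) n ≫ g = r • f := by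
    rw [Abelian.Ext.smul_eq_comp_mk₀, P.extMk_comp_mk₀, P.extMk_eq_zero_iff _ _ _ _ n rfl]
    simp only [Linear.comp_smul, Category.comp_id]
  rw [Module.mem_annihilator]
  refine ⟨fun h f hf ↦ (smul_extMk_eq_zero_iff f hf).mp (h _), fun h e ↦ ?_⟩
  obtain ⟨f, hf, rfl⟩ := P.extMk_surjective e (n + 2) rfl
  exact (smul_extMk_eq_zero_iff f hf).mpr (h f hf)

theorem annihilator_ext_succ (X Y : ModuleCat.{u} R) (n : ℕ) :
    Module.annihilator R ↥(((Ext R (ModuleCat.{u} R) (n + 1)).obj (Opposite.op X)).obj Y) =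
      Module.annihilator R (Abelian.Ext X Y (n + 1)) := by
  let P := projectiveResolution X
  let K := P.complex.linearYonedaObj R Y
  let isoHomology := P.isoExt (R := R) (n + 1) Y ≪≫
    K.homologyIsoSc' n (n + 1) (n + 2) (by simp) (by simp)
  ext r
  rw [isoHomology.toLinearEquiv.annihilator_eq, mem_annihilator_homology_iff,
    mem_annihilator_abelianExt_succ_iff P]
  rfl

theorem subsingleton_ext_zero {X Y : ModuleCat.{u} R} [Subsingleton (X ⟶ Y)] :
    Subsingleton ↥(((Ext R (ModuleCat.{u} R) 0).obj (Opposite.op X)).obj Y) := by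
  let P := projectiveResolution X
  let K := P.complex.linearYonedaObj R Y
  let isoHomology := P.isoExt (R := R) 0 Y ≪≫ K.homologyIsoSc' 0 0 1 (by simp) (by simp)
  have cocycle_eq_zero (f : P.complex.X 0 ⟶ Y) (hf : P.complex.d 1 0 ≫ f = 0) : f = 0 := by
    obtain ⟨g, rfl⟩ := Limits.CokernelCofork.IsColimit.desc' P.exact₀.gIsCokernel f hf
    have hg : g = 0 := Subsingleton.elim (α := X ⟶ Y) g 0
    rw [hg, Limits.comp_zero]
  rw [← Module.annihilator_eq_top_iff (R := R), Ideal.eq_top_iff_one,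
    isoHomology.toLinearEquiv.annihilator_eq, mem_annihilator_homology_iff]
  refine fun f hf ↦ ⟨0, ?_⟩
  rw [map_zero, one_smul]
  exact (cocycle_eq_zero f hf).symm

end ExtComparison

section ExtVanishing

section Abelian

open Abelian

variable {C : Type u} [Category.{v} C] [Abelian C] [HasExt.{w} C]

theorem subsingleton_ext_X₂ {S : ShortComplex C} (hS : S.ShortExact) {Y : C} {i : ℕ}
    (h₁ : Subsingleton (Ext S.X₁ Y i)) (h₃ : Subsingleton (Ext S.X₃ Y i)) :
    Subsingleton (Ext S.X₂ Y i) := by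
  refine subsingleton_of_forall_eq 0 fun e ↦ ?_
  obtain ⟨e', rfl⟩ := Ext.contravariant_sequence_exact₂ hS Y e (Subsingleton.elim _ _)
  rw [Subsingleton.elim e' 0, Ext.comp_zero]

theorem subsingleton_ext_X₁ {S : ShortComplex C} (hS : S.ShortExact) {Y : C} {i : ℕ}
    (h₂ : Subsingleton (Ext S.X₂ Y i)) (h₃ : Subsingleton (Ext S.X₃ Y (i + 1))) :
    Subsingleton (Ext S.X₁ Y i) := by
  refine subsingleton_of_forall_eq 0 fun e ↦ ?_
  obtain ⟨e', rfl⟩ := Ext.contravariant_sequence_exact₁ hS Y e (add_comm 1 i)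
    (Subsingleton.elim _ _)
  rw [Subsingleton.elim e' 0, Ext.comp_zero]

theorem subsingleton_ext_X₃ {S : ShortComplex C} (hS : S.ShortExact) {Y : C} {i : ℕ}
    (h₁ : Subsingleton (Ext S.X₁ Y i)) (h₂ : Subsingleton (Ext S.X₂ Y (i + 1))) :
    Subsingleton (Ext S.X₃ Y (i + 1)) := by
  refine subsingleton_of_forall_eq 0 fun e ↦ ?_
  obtain ⟨e', rfl⟩ := Ext.contravariant_sequence_exact₃ hS Y e
    (Subsingleton.elim _ _) (add_comm 1 i)
  rw [Subsingleton.elim e' 0, Ext.comp_zero]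

theorem subsingleton_ext_of_iso {X X' Y : C} (e : X ≅ X') {i : ℕ} (h : Subsingleton (Ext X Y i)) :
    Subsingleton (Ext X' Y i) :=
  (((extFunctor i).mapIso e.op).app Y).addCommGroupIsoToAddEquiv.toEquiv.subsingleton_congr.mpr h

end Abelian

variable {R : Type u} [CommRing R]

theorem shortExact_linearMap_mkQ {M' M : Type v} [AddCommGroup M'] [Module R M'] [AddCommGroup M]
    [Module R M] {f : M' →ₗ[R] M} (hf : Function.Injective f) :
    (ModuleCat.shortComplexOfCompEqZero f (LinearMap.range f).mkQ
      (LinearMap.range_mkQ_comp f)).ShortExact :=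
  ModuleCat.shortComplex_shortExact _ (LinearMap.exact_map_mkQ_range f) hf
    (Submodule.mkQ_surjective _)

-- Multiplication by `y` is onto on the finite module `Ext^i(M, N)`.
theorem subsingleton_ext_of_quotSMulTop [IsNoetherianRing R] {M N : ModuleCat.{u} R}
    [Module.Finite R M] [Module.Finite R N] {y : R} (hyJ : y ∈ Ideal.jacobson (⊥ : Ideal R))
    (hy : IsSMulRegular M y) {i : ℕ}
    (h : Subsingleton (Abelian.Ext (ModuleCat.of R (QuotSMulTop y M)) N (i + 1))) :
    Subsingleton (Abelian.Ext M N i) := by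
  have smul_surjective (e : Abelian.Ext M N i) : ∃ e', y • e' = e := by
    obtain ⟨e', he'⟩ : ∃ e' : Abelian.Ext M N i,
        (Abelian.Ext.mk₀ (y • 𝟙 M)).comp e' (zero_add i) = e :=
      Abelian.Ext.contravariant_sequence_exact₁ hy.smulShortComplex_shortExact
        N e (add_comm 1 i) (h.elim _ _)
    refine ⟨e', ?_⟩
    rw [← he', Abelian.Ext.mk₀_smul, Abelian.Ext.smul_comp, Abelian.Ext.mk₀_id_comp]
  have top_eq_bot : (⊤ : Submodule R (Abelian.Ext M N i)) = ⊥ :=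
    Submodule.eq_bot_of_le_smul_of_le_jacobson_bot (Ideal.span {y}) ⊤
      (ModuleCat.finite_ext R M N i).fg_top
      (fun e _ ↦ by
        obtain ⟨e', rfl⟩ := smul_surjective e
        exact Submodule.smul_mem_smul (Ideal.mem_span_singleton_self y) trivial)
      ((Ideal.span_singleton_le_iff_mem _).mpr hyJ)
  exact (Submodule.subsingleton_iff R).mp (subsingleton_of_bot_eq_top top_eq_bot.symm)

/-- `Ext^i_R(-, N)` vanishes on all finitely generated `R`-modules. Over a Noetherian ring this
says that `N` has injective dimension less than `i`. -/
def ExtVanishesOnFinite (N : ModuleCat.{u} R) (i : ℕ) : Prop :=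
  ∀ M : ModuleCat.{u} R, Module.Finite R M → Subsingleton (Abelian.Ext M N i)

theorem isSMulRegular_quotient_prime {p : Ideal R} [p.IsPrime] {y : R} (hy : y ∉ p) :
    IsSMulRegular (R ⧸ p) y := by
  rw [← isSMulRegular_algebraMap_iff (A := R ⧸ p)]
  exact IsSMulRegular.of_ne_zero (Ideal.Quotient.eq_zero_iff_mem.not.mpr hy)

variable [IsLocalRing R] [IsNoetherianRing R]

theorem extVanishesOnFinite_of_residueField {N : ModuleCat.{u} R} [Module.Finite R N] {i : ℕ}
    (hsucc : ExtVanishesOnFinite N (i + 1))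
    (hk : Subsingleton (Abelian.Ext (ModuleCat.of R (R ⧸ maximalIdeal R)) N i)) :
    ExtVanishesOnFinite N i := by
  suffices ∀ (M : Type u) [AddCommGroup M] [Module R M], Module.Finite R M →
      Subsingleton (Abelian.Ext (ModuleCat.of R M) N i) from fun M hM ↦ this M hM
  intro M _ _ hM
  induction hM using IsNoetherianRing.induction_on_isQuotientEquivQuotientPrime R with
  | subsingleton M =>
    have : Limits.IsZero (ModuleCat.of R M) := ModuleCat.isZero_of_subsingleton _
    exact subsingleton_of_forall_eq 0 fun e ↦ by
      rw [← Abelian.Ext.mk₀_id_comp e, this.eq_zero_of_src (𝟙 _), Abelian.Ext.mk₀_zero,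
        Abelian.Ext.zero_comp]
  | quotient M p e =>
    refine subsingleton_ext_of_iso e.symm.toModuleIso ?_
    by_cases hp : p.1 = maximalIdeal R
    · rwa [hp]
    · obtain ⟨y, hym, hyp⟩ :=
        SetLike.exists_of_lt (lt_of_le_of_ne (le_maximalIdeal p.2.ne_top) hp)
      exact subsingleton_ext_of_quotSMulTop (maximalIdeal_le_jacobson _ hym)
        (isSMulRegular_quotient_prime hyp) (hsucc _ inferInstance)
  | exact M₁ M₂ M₃ f g hf hg hfg h₁ h₃ =>
    exact subsingleton_ext_X₂ (ModuleCat.shortComplex_shortExact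
      (ModuleCat.shortComplexOfCompEqZero f g hfg.linearMap_comp_eq_zero) hfg hf hg) h₁ h₃

-- If no element of the maximal ideal is regular on `M`, then the residue field `k` embeds in `M`,
-- and right exactness of `Ext^r(-, N)` in the top degree carries `Ext^r(M, N) = 0` over to `k`.
theorem extVanishesOnFinite_of_not_isSMulRegular {M N : ModuleCat.{u} R} [Module.Finite R M]
    [Module.Finite R N] (hM : ∀ y ∈ maximalIdeal R, ¬ IsSMulRegular M y) {r : ℕ}
    (hr : Subsingleton (Abelian.Ext M N r)) (hsucc : ExtVanishesOnFinite N (r + 1)) :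
    ExtVanishesOnFinite N r := by
  refine extVanishesOnFinite_of_residueField hsucc ?_
  have : ¬ Subsingleton ((R ⧸ maximalIdeal R) →ₗ[R] M) := by
    rw [IsSMulRegular.subsingleton_linearMap_iff, Ideal.annihilator_quotient]
    rintro ⟨y, hym, hy⟩
    exact hM y hym hy
  obtain ⟨f, hf⟩ : ∃ f : (R ⧸ maximalIdeal R) →ₗ[R] M, f ≠ 0 := by
    by_contra! h
    exact this (subsingleton_of_forall_eq 0 h)
  have : IsSimpleModule R (R ⧸ maximalIdeal R) := isSimpleModule_iff_isCoatom.mpr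
    (maximalIdeal.isMaximal R).out
  exact subsingleton_ext_X₁ (shortExact_linearMap_mkQ (LinearMap.injective_of_ne_zero hf)) hr
    (hsucc _ inferInstance)

theorem extVanishesOnFinite_of_le {M N : ModuleCat.{u} R} [Module.Finite R M] [Module.Finite R N]
    (hM : ∀ y ∈ maximalIdeal R, ¬ IsSMulRegular M y) {j n : ℕ} [HasProjectiveDimensionLT M j]
    (hjn : j ≤ n) (hn : ExtVanishesOnFinite N n) : ExtVanishesOnFinite N j :=
  Nat.decreasingInduction' (P := ExtVanishesOnFinite N)
    (fun r _ hjr hsucc ↦ extVanishesOnFinite_of_not_isSMulRegular hM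
      (HasProjectiveDimensionLT.subsingleton M j r hjr N) hsucc) hjn hn

end ExtVanishing

section GorensteinDimensionTwo

open RingTheory.Sequence

theorem subsingleton_linearMap_quotSMulTop {R : Type u} [CommRing R] {M N : ModuleCat.{u} R} {x : R}
    (hx : IsSMulRegular N x) (h₀ : Subsingleton (M →ₗ[R] N))
    (h₁ : Subsingleton (Abelian.Ext M N 1)) : Subsingleton (M →ₗ[R] QuotSMulTop x N) := by
  refine subsingleton_of_forall_eq 0 fun f ↦ ?_
  obtain ⟨e, he⟩ := Abelian.Ext.covariant_sequence_exact₃ M hx.smulShortComplex_shortExact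
    (Abelian.Ext.mk₀ (ModuleCat.ofHom f)) (zero_add 1) (h₁.elim _ _)
  obtain ⟨g, rfl⟩ := (Abelian.Ext.mk₀_bijective _ _).2 e
  have hg : g = 0 := ModuleCat.hom_ext (Subsingleton.elim (α := M →ₗ[R] N) g.hom 0)
  rw [hg, Abelian.Ext.mk₀_comp_mk₀, Limits.zero_comp] at he
  exact congrArg ModuleCat.Hom.hom ((Abelian.Ext.mk₀_bijective _ _).1 he).symm

theorem notMem_of_mem_minimalPrimes_of_isSMulRegular {R : Type u} [CommRing R] [IsNoetherianRing R]
    {x y : R} {p : Ideal R} (hp : p ∈ (Ideal.span {x}).minimalPrimes)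
    (hy : IsSMulRegular (QuotSMulTop x R) y) : y ∉ p := by
  have annihilator_eq : Module.annihilator R (QuotSMulTop x R) = Ideal.span {x} :=
    (Submodule.quotEquivOfEq _ _ (by
      rw [← Submodule.ideal_span_singleton_smul, smul_eq_mul, Ideal.mul_top])).annihilator_eq.trans
      (Ideal.annihilator_quotient (I := Ideal.span {x}))
  have hp : p ∈ associatedPrimes R (QuotSMulTop x R) :=
    Module.associatedPrimes.minimalPrimes_annihilator_subset_associatedPrimes R _
      (annihilator_eq ▸ hp)
  intro hyp
  have : y ∈ {r : R | IsSMulRegular (QuotSMulTop x R) r}ᶜ := by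
    rw [← biUnion_associatedPrimes_eq_compl_regular]
    exact Set.mem_biUnion hp hyp
  exact this hy

theorem mem_nonZeroDivisors_of_isWeaklyRegular_cons {R : Type u} [CommRing R] {x : R} {rs : List R}
    (h : IsWeaklyRegular R (x :: rs)) : x ∈ nonZeroDivisors R :=
  mem_nonZeroDivisors_iff_left.mpr fun _ ↦
    ((isWeaklyRegular_cons_iff R x rs).mp h).1.right_eq_zero_of_smul

theorem mem_maximalIdeal_of_isRegular {R : Type u} [CommRing R] [IsLocalRing R] {M : Type v}
    [AddCommGroup M] [Module R M] {rs : List R} (hrs : IsRegular M rs) :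
    ∀ r ∈ rs, r ∈ maximalIdeal R := fun _ hr ↦
  le_maximalIdeal (J := Ideal.ofList rs) (fun h ↦ hrs.2 (by rw [h, Submodule.top_smul]))
    (Ideal.subset_span hr)

theorem hasProjectiveDimensionLT_quotSMulTop {R : Type u} [CommRing R] {x : R}
    (hx : IsSMulRegular R x) :
    HasProjectiveDimensionLT (ModuleCat.of R (QuotSMulTop x R)) 2 :=
  have : Projective (ModuleCat.of R R) := ModuleCat.projective_of_categoryTheory_projective _
  (hx.smulShortComplex_shortExact (M := ModuleCat.of R R)).hasProjectiveDimensionLT_X₃ 1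
    (inferInstanceAs (HasProjectiveDimensionLT (ModuleCat.of R R) 1))
    (inferInstanceAs (HasProjectiveDimensionLT (ModuleCat.of R R) 2))

variable {R : Type u} [CommRing R] [IsLocalRing R] [IsNoetherianRing R]

-- For `p` minimal over `x`, vanishing of `Ext^2` forces `Ext^1(R/p, R) = 0`, hence
-- `Hom(R/p, R/x) = 0`; but `p` is associated to `R/x`.
theorem not_extVanishesOnFinite_two (hdim : 1 < ringKrullDim R) {x : R} (hx : IsSMulRegular R x)
    (hxm : x ∈ maximalIdeal R) : ¬ ExtVanishesOnFinite (ModuleCat.of R R) 2 := by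
  intro hExt
  obtain ⟨p, hp, hpm⟩ := Ideal.exists_minimalPrimes_le
    ((Ideal.span_singleton_le_iff_mem (maximalIdeal R)).mpr hxm)
  have := hp.1.1
  have hxp : x ∈ p := hp.1.2 (Ideal.mem_span_singleton_self x)
  have p_ne_maximalIdeal : p ≠ maximalIdeal R := by
    rintro rfl
    have height_le_one := Ideal.height_le_one_of_isPrincipal_of_mem_minimalPrimes _ _ hp
    rw [← maximalIdeal_height_eq_ringKrullDim] at hdim
    exact absurd height_le_one (not_le.mpr (WithBot.coe_lt_coe.mp hdim))
  obtain ⟨y, hym, hyp⟩ := SetLike.exists_of_lt (lt_of_le_of_ne hpm p_ne_maximalIdeal)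
  have ext_one_vanishes :
      Subsingleton (Abelian.Ext (ModuleCat.of R (R ⧸ p)) (ModuleCat.of R R) 1) :=
    subsingleton_ext_of_quotSMulTop (maximalIdeal_le_jacobson _ hym)
      (isSMulRegular_quotient_prime hyp) (hExt _ inferInstance)
  have hom_vanishes : Subsingleton ((R ⧸ p) →ₗ[R] R) :=
    hx.linearMap_subsingleton_of_mem_annihilator (by rwa [Ideal.annihilator_quotient])
  obtain ⟨z, hzp, hz⟩ := IsSMulRegular.subsingleton_linearMap_iff.mp
    (subsingleton_linearMap_quotSMulTop (N := ModuleCat.of R R) hx hom_vanishes ext_one_vanishes)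
  rw [Ideal.annihilator_quotient] at hzp
  exact notMem_of_mem_minimalPrimes_of_isSMulRegular hp hz hzp

theorem exists_mem_maximalIdeal_isSMulRegular [IsReduced R] (hR : ¬ IsField R) :
    ∃ x ∈ maximalIdeal R, IsSMulRegular R x := by
  by_contra! h
  obtain ⟨a, ha, ha0⟩ := SetLike.exists_of_lt
    (Ideal.bot_lt_annihilator_of_disjoint_nonZeroDivisors (Set.disjoint_left.mpr fun x hxm hx ↦
      h x hxm (Module.Flat.isSMulRegular_of_nonZeroDivisors hx)))
  rw [Submodule.mem_annihilator] at ha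
  by_cases ham : a ∈ maximalIdeal R
  · exact ha0 (pow_eq_zero_iff two_ne_zero |>.mp ((sq a).trans (ha a ham)))
  · refine hR (isField_iff_maximalIdeal_eq.mpr (eq_bot_iff.mpr fun z hz ↦ ?_))
    exact (notMem_maximalIdeal.mp ham).mul_right_eq_zero.mp (ha z hz)

theorem exists_maximalIdeal_pow_le {I : Ideal R} (hI : ∀ p ∈ I.minimalPrimes, p.IsMaximal) :
    ∃ k, maximalIdeal R ^ k ≤ I := by
  refine Ideal.exists_pow_le_of_le_radical_of_fg ?_ (IsNoetherian.noetherian _)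
  rw [← Ideal.sInf_minimalPrimes]
  exact le_sInf fun p hp ↦ (eq_maximalIdeal (hI p hp)).ge

theorem exists_maximalIdeal_pow_le_ofList {rs : List R} (hrs : IsRegular R rs)
    (hdim : ringKrullDim R = rs.length) : ∃ k, maximalIdeal R ^ k ≤ Ideal.ofList rs := by
  have dim_quotient : ringKrullDim (R ⧸ Ideal.ofList rs) = 0 := by
    have := ringKrullDim_add_length_eq_ringKrullDim_of_isRegular rs hrs
    rw [hdim] at this
    exact ENat.WithBot.add_natCast_cancel.mp (this.trans (zero_add _).symm)
  exact exists_maximalIdeal_pow_le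
    (Ideal.krullDimLE_zero_quotient_iff_forall_minimalPrimes_isMaximal.mp
      (Ring.krullDimLE_iff.mpr dim_quotient.le))

theorem exists_isSMulRegular_quotSMulTop (hdim : 1 < ringKrullDim R) {n : ℕ} (hn : 2 ≤ n)
    (hExt : ExtVanishesOnFinite (ModuleCat.of R R) n) {x : R} (hx : IsSMulRegular R x)
    (hxm : x ∈ maximalIdeal R) : ∃ w ∈ maximalIdeal R, IsSMulRegular (QuotSMulTop x R) w := by
  by_contra! hw
  have := hasProjectiveDimensionLT_quotSMulTop hx
  exact not_extVanishesOnFinite_two hdim hx hxm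
    (extVanishesOnFinite_of_le (M := ModuleCat.of R (QuotSMulTop x R)) hw hn hExt)

theorem not_isSMulRegular_quotient_ofList {rs : List R} (hrs : IsRegular R rs)
    (hdim : ringKrullDim R = rs.length) {y : R} (hy : y ∈ maximalIdeal R) :
    ¬ IsSMulRegular (R ⧸ Ideal.ofList rs • (⊤ : Submodule R R)) y := by
  intro hreg
  obtain ⟨k, hk⟩ := exists_maximalIdeal_pow_le_ofList hrs hdim
  have pow_smul_eq_zero (q : R ⧸ Ideal.ofList rs • (⊤ : Submodule R R)) : y ^ k • q = 0 := by
    obtain ⟨r, rfl⟩ := Submodule.Quotient.mk_surjective _ q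
    exact (Submodule.Quotient.mk_eq_zero _).mpr
      (Submodule.smul_mem_smul (hk (Ideal.pow_mem_pow hy k)) trivial)
  have quotient_trivial : Subsingleton (R ⧸ Ideal.ofList rs • (⊤ : Submodule R R)) :=
    subsingleton_of_forall_eq 0 fun q ↦ hreg.pow k ((pow_smul_eq_zero q).trans (smul_zero _).symm)
  exact hrs.2 (Submodule.Quotient.subsingleton_iff.mp quotient_trivial).symm

theorem extVanishesOnFinite_length_succ {rs : List R} (hrs : IsRegular R rs)
    (hdim : ringKrullDim R = rs.length) {n : ℕ} (hn : rs.length + 1 ≤ n)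
    (hExt : ExtVanishesOnFinite (ModuleCat.of R R) n) :
    ExtVanishesOnFinite (ModuleCat.of R R) (rs.length + 1) := by
  let Q := ModuleCat.of R (R ⧸ Ideal.ofList rs • (⊤ : Submodule R R))
  have : HasProjectiveDimensionLT Q (rs.length + 1) := by
    refine (projectiveDimension_le_iff Q rs.length).mp ?_
    rw [ModuleCat.projectiveDimension_quotient_eq_add_length_of_isWeaklyRegular (ModuleCat.of R R)
        rs hrs.1 (mem_maximalIdeal_of_isRegular hrs),
      ModuleCat.projectiveDimension_eq_zero_of_projective, zero_add]
  exact extVanishesOnFinite_of_le (M := Q)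
    (fun y ↦ not_isSMulRegular_quotient_ofList hrs hdim) hn hExt

theorem exists_isRegular_pair [IsReduced R] (hdim : 1 < ringKrullDim R) {n : ℕ} (hn : 2 ≤ n)
    (hExt : ExtVanishesOnFinite (ModuleCat.of R R) n) : ∃ x w : R, IsRegular R [x, w] := by
  have hR : ¬ IsField R := fun h ↦ by
    rw [ringKrullDim_eq_zero_of_isField h] at hdim
    exact absurd hdim (by decide)
  obtain ⟨x, hxm, hx⟩ := exists_mem_maximalIdeal_isSMulRegular hR
  obtain ⟨w, hwm, hw⟩ := exists_isSMulRegular_quotSMulTop hdim hn hExt hx hxm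
  refine ⟨x, w, IsRegular.of_isWeaklyRegular_of_mem_maximalIdeal R (by simp_all) ?_⟩
  exact IsWeaklyRegular.cons hx (IsWeaklyRegular.cons hw (IsWeaklyRegular.nil R _))

end GorensteinDimensionTwo

section IntegralClosureDepth

open IsLocalization
open scoped Pointwise

variable {R : Type u} [CommRing R] {K : Type v} [CommRing K] [Algebra R K] [IsFractionRing R K]

theorem isInteger_of_isInteger_smul {x w : R} (hx : x ∈ nonZeroDivisors R)
    (hw : IsSMulRegular (QuotSMulTop x R) w) {z : K} (hxz : IsInteger R (x • z))
    (hwz : IsInteger R (w • z)) : IsInteger R z := by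
  obtain ⟨a, ha⟩ := hxz
  obtain ⟨b, hb⟩ := hwz
  have w_mul_eq : w * a = x * b := IsFractionRing.injective R K (by
    rw [map_mul, map_mul, ha, hb, ← Algebra.smul_def, ← Algebra.smul_def, smul_comm])
  obtain ⟨c, -, hc⟩ := mem_of_isSMulRegular_quotient_of_smul_mem hw
    (show w • a ∈ x • (⊤ : Submodule R R) from ⟨b, trivial, w_mul_eq.symm⟩)
  refine ⟨c, (IsLocalization.map_units K ⟨x, hx⟩).mul_left_cancel ?_⟩
  rw [← map_mul, ← Algebra.smul_def, ← ha]
  exact congrArg (algebraMap R K) hc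

theorem isInteger_smul_of_isInteger_smul_mul_pow {x w c : R} (hx : x ∈ nonZeroDivisors R)
    (hw : IsSMulRegular (QuotSMulTop x R) w) {z : K}
    (h : ∀ i j : ℕ, IsInteger R (c • ((x • z) ^ i * (w • z) ^ j))) (n i j : ℕ) :
    IsInteger R (c • ((x • z) ^ i * (w • z) ^ j * z ^ n)) := by
  induction n generalizing i j with
  | zero => simpa only [pow_zero, mul_one] using h i j
  | succ n ih =>
    refine isInteger_of_isInteger_smul hx hw ?_ ?_
    · convert ih (i + 1) j using 1
      simp only [Algebra.smul_def]
      ring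
    · convert ih i (j + 1) using 1
      simp only [Algebra.smul_def]
      ring

theorem isIntegral_of_isIntegral_smul [IsNoetherianRing R] {x w : R} (hx : x ∈ nonZeroDivisors R)
    (hw : IsSMulRegular (QuotSMulTop x R) w) {z : K} (hxz : IsIntegral R (x • z))
    (hwz : IsIntegral R (w • z)) : IsIntegral R z := by
  let C := Algebra.adjoin R {x • z, w • z}
  have C_fg : C.toSubmodule.FG := fg_adjoin_of_finite (by simp)
    (by rintro y (rfl | rfl) <;> assumption)
  obtain ⟨c, hc, hcC⟩ := FractionalIdeal.isFractional_of_fg (S := nonZeroDivisors R) C_fg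
  have monomial_mem (i j : ℕ) : (x • z) ^ i * (w • z) ^ j ∈ C :=
    mul_mem (pow_mem (Algebra.subset_adjoin (by simp)) _)
      (pow_mem (Algebra.subset_adjoin (by simp)) _)
  have almostIntegral : IsAlmostIntegral R z := ⟨c, hc, fun n ↦ by
    simpa [IsInteger] using isInteger_smul_of_isInteger_smul_mul_pow hx hw
      (fun i j ↦ hcC _ (monomial_mem i j)) n 0 0⟩
  exact almostIntegral.isIntegral_of_nonZeroDivisors_le_comap
    fun r hr ↦ (IsLocalization.map_units K ⟨r, hr⟩).mem_nonZeroDivisors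

end IntegralClosureDepth

section NoetherianCompletion

open AdicCompletion

theorem factorₐ_comp_evalₐ {R : Type u} [CommRing R] (I : Ideal R) {m n : ℕ} (hmn : m ≤ n) :
    (Ideal.Quotient.factorₐ R (Ideal.pow_le_pow_right hmn)).comp (evalₐ I n) = evalₐ I m := by
  ext a
  induction a using AdicCompletion.induction_on with
  | _ a =>
    rw [AlgHom.comp_apply, evalₐ_mk, evalₐ_mk]
    exact AdicCompletion.Ideal.mk_eq_mk I hmn a

variable {P : Type u} {S : Type v} [CommRing P] [CommRing S] [Algebra P S]

/-- The map induced by `P → S` from the completion of `P` at `J` to the completion of `S` at the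
extended ideal. -/
def adicCompletionMapAlgHom (J : Ideal P) :
    AdicCompletion J P →ₐ[P] AdicCompletion (J.map (algebraMap P S)) S :=
  liftAlgHom _ (fun n ↦ (Ideal.quotientMapₐ _ (Algebra.ofId P S) (by
      rw [← Ideal.map_le_iff_le_comap]
      exact (Ideal.map_pow _ J n).le)).comp (evalₐ J n)) fun hmn ↦ by
    rw [← factorₐ_comp_evalₐ J hmn, ← AlgHom.comp_assoc, ← AlgHom.comp_assoc]
    congr 1
    exact Ideal.Quotient.algHom_ext _ (Subsingleton.elim _ _)

theorem adicCompletion_algHom_surjective {J : Ideal P} (hJ : J.FG)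
    (hPS : Function.Surjective (algebraMap P S))
    (φ : AdicCompletion J P →ₐ[P] AdicCompletion (J.map (algebraMap P S)) S) :
    Function.Surjective φ := by
  have hI : (J.map (algebraMap P S)).FG := hJ.map _
  let J' := J.map (algebraMap P (AdicCompletion J P))
  have map_eq : J'.map φ.toRingHom =
      (J.map (algebraMap P S)).map (algebraMap S (AdicCompletion (J.map (algebraMap P S)) S)) := by
    rw [Ideal.map_map, Ideal.map_map, ← IsScalarTower.algebraMap_eq, AlgHom.toRingHom_eq_coe,
      φ.comp_algebraMap]
  have : IsAdicComplete J' (AdicCompletion J P) := isAdicComplete_self _ hJ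
  have : IsAdicComplete (J'.map φ.toRingHom) (AdicCompletion (J.map (algebraMap P S)) S) := by
    rw [map_eq]
    exact isAdicComplete_self _ hI
  refine surjective_of_mk_map_comp_surjective (I := J') φ.toRingHom fun y ↦ ?_
  obtain ⟨a, rfl⟩ := Ideal.Quotient.mk_surjective y
  obtain ⟨s, hs⟩ := Ideal.Quotient.mk_surjective (evalOneₐ _ a)
  obtain ⟨p, rfl⟩ := hPS s
  refine ⟨algebraMap P _ p, ?_⟩
  rw [RingHom.comp_apply, Ideal.Quotient.eq, map_eq, ← ker_evalOneₐ_eq_map _ hI, RingHom.mem_ker]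
  change evalOneₐ _ (φ (algebraMap P _ p) - a) = 0
  rw [φ.commutes, map_sub, ← hs, sub_eq_zero, IsScalarTower.algebraMap_apply P S, AlgHom.commutes]
  rfl

theorem isNoetherianRing_adicCompletion {R : Type u} [CommRing R] [IsNoetherianRing R]
    (I : Ideal R) : IsNoetherianRing (AdicCompletion I R) := by
  obtain ⟨s, rfl⟩ := IsNoetherian.noetherian I
  let J := MvPolynomial.idealOfVars s R
  let _ : Algebra (MvPolynomial s R) R := (MvPolynomial.aeval (Subtype.val : s → R)).toAlgebra
  have map_eq : J.map (algebraMap (MvPolynomial s R) R) = Ideal.span s := by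
    change (Ideal.span (Set.range MvPolynomial.X)).map _ = _
    rw [Ideal.map_span, ← Set.range_comp]
    congr 1
    ext
    simp [RingHom.algebraMap_toAlgebra]
  have : IsNoetherianRing (AdicCompletion J (MvPolynomial s R)) :=
    isNoetherianRing_of_ringEquiv (MvPowerSeries s R)
      (MvPowerSeries.toAdicCompletionAlgEquiv s R).toRingEquiv
  have aeval_surjective : Function.Surjective (algebraMap (MvPolynomial s R) R) :=
    fun r ↦ ⟨MvPolynomial.C r, MvPolynomial.aeval_C _ r⟩
  have := isNoetherianRing_of_surjective _ _ (adicCompletionMapAlgHom (S := R) J).toRingHom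
    (adicCompletion_algHom_surjective (MvPolynomial.idealOfVars_fg s R) aeval_surjective _)
  rwa [map_eq] at this

end NoetherianCompletion

section Separatedness

theorem eq_of_lt_of_mem_minimalPrimes_span_insert {R : Type u} [CommRing R] [IsNoetherianRing R]
    {p q q' : Ideal R} [p.IsPrime] [q.IsPrime] {t : R} (hpq : p ≤ q) (hqq' : q < q')
    (hq' : q' ∈ (Ideal.span (insert t (p : Set R))).minimalPrimes) : q = p := by
  have hq := Ideal.mem_minimalPrimes_span_of_mem_minimalPrimes_span_insert hqq' t p hq' p hpq
    ((Set.subset_insert t p).trans (Ideal.subset_span.trans Ideal.le_radical))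
  rw [Ideal.span_eq, Ideal.minimalPrimes_eq_subsingleton_self] at hq
  exact hq

theorem isMaximal_of_mem_minimalPrimes_span_insert {R : Type u} [CommRing R] [IsLocalRing R]
    [IsNoetherianRing R] {p : Ideal R} [p.IsPrime] {a : R} (ha : a ∉ p)
    (hmax : ∀ q : Ideal R, q.IsPrime → p < q → a ∈ q) :
    ∀ q ∈ (Ideal.span (insert a (p : Set R))).minimalPrimes, q.IsMaximal := by
  set J := Ideal.span (insert a (p : Set R))
  have lt_of_J_le (q : Ideal R) (hq : J ≤ q) : p < q :=
    lt_of_le_of_ne (fun z hz ↦ hq (Ideal.subset_span (.inr hz)))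
      fun h ↦ ha (h ▸ hq (Ideal.subset_span (.inl rfl)))
  intro q hq
  have hqm : q ≤ maximalIdeal R := le_maximalIdeal hq.1.1.ne_top
  by_contra q_not_maximal
  have maximalIdeal_not_le : ¬ ∃ q' ∈ J.minimalPrimes, maximalIdeal R ≤ q' := fun ⟨q', hq', hle⟩ ↦
    q_not_maximal <| (hqm.antisymm (hle.trans (hq'.2 hq.1 (hqm.trans hle)))) ▸
      maximalIdeal.isMaximal R
  rw [← Ideal.subset_union_prime_finite J.finite_minimalPrimes_of_isNoetherianRing ⊥ ⊥
    fun q' hq' _ _ ↦ hq'.1.1, Set.not_subset] at maximalIdeal_not_le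
  obtain ⟨t, htm, ht⟩ := maximalIdeal_not_le
  simp only [Set.mem_iUnion, SetLike.mem_coe, not_exists] at ht
  -- A minimal prime `q'` of `p + (t)` contains `a`, hence some `q₀` minimal over `p + (a)`;
  -- then `p < q₀ < q'`, against Krull's principal ideal theorem modulo `p`.
  obtain ⟨q', hq', -⟩ := Ideal.exists_minimalPrimes_le
    (Ideal.span_le.mpr (Set.insert_subset htm ((lt_of_J_le q hq.1.2).le.trans hqm)))
  have htq' : t ∈ q' := hq'.1.2 (Ideal.subset_span (.inl rfl))
  have hpq' : (p : Set R) ⊆ q' := fun z hz ↦ hq'.1.2 (Ideal.subset_span (.inr hz))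
  have p_lt_q' : p < q' :=
    lt_of_le_of_ne hpq' fun h ↦ ht q hq ((lt_of_J_le q hq.1.2).le (h ▸ htq'))
  have := hq'.1.1
  obtain ⟨q₀, hq₀, hq₀q'⟩ := Ideal.exists_minimalPrimes_le
    (Ideal.span_le.mpr (Set.insert_subset (hmax q' hq'.1.1 p_lt_q') hpq'))
  have := hq₀.1.1
  have q₀_lt_q' : q₀ < q' := lt_of_le_of_ne hq₀q' fun h ↦ ht q₀ hq₀ (h ▸ htq')
  have p_lt_q₀ := lt_of_J_le q₀ hq₀.1.2
  exact p_lt_q₀.ne' (eq_of_lt_of_mem_minimalPrimes_span_insert p_lt_q₀.le q₀_lt_q' hq')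

variable {R : Type u} [CommRing R] [IsLocalRing R] [IsNoetherianRing R]

theorem exists_isPrime_notMem_maximalIdeal_pow_le {a : R} (ha : ¬ IsNilpotent a) :
    ∃ p : Ideal R, p.IsPrime ∧ a ∉ p ∧ ∃ k, maximalIdeal R ^ k ≤ Ideal.span {a} ⊔ p := by
  have exists_isPrime : {p : Ideal R | p.IsPrime ∧ a ∉ p}.Nonempty := by
    by_contra! h
    refine ha (nilpotent_iff_mem_prime.mpr fun p hp ↦ ?_)
    by_contra hap
    exact (h ▸ ⟨hp, hap⟩ : p ∈ (∅ : Set (Ideal R)))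
  obtain ⟨p, ⟨hp, hap⟩, hmax⟩ := set_has_maximal_iff_noetherian.mpr ‹_› _ exists_isPrime
  refine ⟨p, hp, hap, ?_⟩
  obtain ⟨k, hk⟩ := exists_maximalIdeal_pow_le <|
    isMaximal_of_mem_minimalPrimes_span_insert hap fun q hq hpq ↦
      by_contra fun haq ↦ hmax q ⟨hq, haq⟩ hpq
  exact ⟨k, hk.trans_eq (by rw [Ideal.span_insert, Ideal.span_eq])⟩

variable {U : Type v} [CommRing U] [Algebra R U] [Algebra.IsIntegral R U]

theorem isNilpotent_of_algebraMap_mem_map_pow (hinj : Function.Injective (algebraMap R U)) {a : R}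
    (ha : ∀ n, algebraMap R U a ∈ (maximalIdeal R ^ n).map (algebraMap R U)) : IsNilpotent a := by
  by_contra hnil
  obtain ⟨p, hp, hap, k, hk⟩ := exists_isPrime_notMem_maximalIdeal_pow_le hnil
  obtain ⟨P, -, hP, rfl⟩ := Ideal.exists_ideal_over_prime_of_isIntegral p (⊥ : Ideal U)
    (by rw [← RingHom.ker_eq_comap_bot, (RingHom.injective_iff_ker_eq_bot _).mp hinj]
        exact bot_le)
  obtain ⟨Q, hPQ, hQ, hQm⟩ := Ideal.exists_ideal_over_prime_of_isIntegral (maximalIdeal R) P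
    (le_maximalIdeal hp.ne_top)
  have map_pow_le : (maximalIdeal R ^ (k + 1)).map (algebraMap R U) ≤
      Q * Ideal.span {algebraMap R U a} ⊔ P := by
    rw [pow_succ', ← Set.image_singleton, ← Ideal.map_span]
    refine (Ideal.map_mono (Ideal.mul_mono_right hk)).trans ?_
    rw [Ideal.map_mul, Ideal.map_sup, Ideal.mul_sup]
    exact sup_le_sup (Ideal.mul_mono_left (Ideal.map_le_iff_le_comap.mpr hQm.ge))
      (Ideal.mul_le_right.trans Ideal.map_comap_le)
  obtain ⟨_, hd, b, hb, had⟩ := Submodule.mem_sup.mp (map_pow_le (ha (k + 1)))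
  obtain ⟨d, hdQ, rfl⟩ := Ideal.mem_mul_span_singleton.mp hd
  have mul_mem : (1 - d) * algebraMap R U a ∈ P := by
    rwa [sub_mul, one_mul, sub_eq_of_eq_add' had.symm]
  have one_sub_mem : 1 - d ∈ Q := hPQ ((hP.mem_or_mem mul_mem).resolve_right hap)
  exact hQ.ne_top (Q.eq_top_iff_one.mpr (by simpa using Q.add_mem one_sub_mem hdQ))

theorem isHausdorff_maximalIdeal_of_isIntegral [IsReduced R]
    (hinj : Function.Injective (algebraMap R U))
    (hden : ∀ u : U, ∃ c : R, IsSMulRegular U c ∧ ∃ a, c • u = algebraMap R U a) :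
    IsHausdorff (maximalIdeal R) U := by
  refine ⟨fun u hu ↦ ?_⟩
  obtain ⟨c, hc, a, hcu⟩ := hden u
  have a_nilpotent : IsNilpotent a := isNilpotent_of_algebraMap_mem_map_pow hinj fun n ↦ by
    have hn := SModEq.zero.mp (hu n)
    rw [Ideal.smul_top_eq_map] at hn
    exact hcu ▸ Submodule.smul_mem _ c hn
  rw [a_nilpotent.eq_zero, map_zero] at hcu
  exact hc.right_eq_zero_of_smul hcu

end Separatedness

section KrullAkizuki

variable {R : Type u} [CommRing R]

/-- The length of the localization `S⁻¹M` over `S⁻¹R`. The Krull–Akizuki argument only needs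
additivity, so running it with this length yields generators up to `S`-torsion without leaving `M`;
for `S = ⊥` it is the usual length. -/
def localizedLength (S : Submonoid R) (M : Type v) [AddCommGroup M] [Module R M] : ℕ∞ :=
  Module.length (Localization S) (LocalizedModule S M)

variable {S : Submonoid R} {M : Type v} {N : Type w} [AddCommGroup M] [Module R M]
  [AddCommGroup N] [Module R N]

theorem localizedLength_le_of_injective {f : M →ₗ[R] N} (hf : Function.Injective f) :
    localizedLength S M ≤ localizedLength S N :=
  Module.length_le_of_injective (LocalizedModule.map S f) (LocalizedModule.map_injective S f hf)

theorem localizedLength_le_of_surjective {f : M →ₗ[R] N} (hf : Function.Surjective f) :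
    localizedLength S N ≤ localizedLength S M :=
  Module.length_le_of_surjective (LocalizedModule.map S f) (LocalizedModule.map_surjective S f hf)

theorem localizedLength_eq_add_of_exact {P : Type*} [AddCommGroup P] [Module R P] {f : M →ₗ[R] N}
    {g : N →ₗ[R] P} (hf : Function.Injective f) (hg : Function.Surjective g)
    (hfg : Function.Exact f g) :
    localizedLength S N = localizedLength S M + localizedLength S P :=
  Module.length_eq_add_of_exact (LocalizedModule.map S f) (LocalizedModule.map S g)
    (LocalizedModule.map_injective S f hf) (LocalizedModule.map_surjective S g hg)
    (LocalizedModule.map_exact S f g hfg)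

theorem localizedLength_eq_zero_iff :
    localizedLength S M = 0 ↔ ∀ m : M, ∃ s ∈ S, s • m = 0 := by
  rw [localizedLength, Module.length_eq_zero_iff, LocalizedModule.subsingleton_iff]

theorem length_ne_top_of_forall_minimalPrimes_isMaximal [IsNoetherianRing R] [Module.Finite R M]
    (h : ∀ p ∈ (Module.annihilator R M).minimalPrimes, p.IsMaximal) : Module.length R M ≠ ⊤ := by
  let _ := Module.quotientAnnihilator (R := R) (M := M)
  have : IsArtinianRing (R ⧸ Module.annihilator R M) :=
    isArtinianRing_iff_isNoetherianRing_krullDimLE_zero.mpr ⟨inferInstance,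
      Ideal.krullDimLE_zero_quotient_iff_forall_minimalPrimes_isMaximal.mpr h⟩
  have : Module.Finite (R ⧸ Module.annihilator R M) M := .of_restrictScalars_finite R _ _
  rw [Module.length_eq_of_surjective (R := R ⧸ Module.annihilator R M) (S := R)
    Ideal.Quotient.mk_surjective]
  exact Module.length_ne_top

theorem localizedLength_ne_top [IsNoetherianRing R] [Module.Finite R M]
    (h : ∀ p q : Ideal R, p.IsPrime → q.IsPrime → Module.annihilator R M ≤ p → p ≤ q →
      Disjoint (S : Set R) q → p = q) : localizedLength S M ≠ ⊤ := by
  have : IsNoetherianRing (Localization S) := IsLocalization.isNoetherianRing S _ inferInstance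
  refine length_ne_top_of_forall_minimalPrimes_isMaximal fun P hP ↦ ?_
  have := hP.1.1
  obtain ⟨Q, hQ, hPQ⟩ := Ideal.exists_le_maximal P hP.1.1.ne_top
  have annihilator_le : Module.annihilator R M ≤ P.under R := fun r hr ↦ hP.1.2 <| by
    refine Module.mem_annihilator.mpr fun z ↦ ?_
    induction z using LocalizedModule.induction_on with
    | h m s =>
      rw [algebraMap_smul, LocalizedModule.smul'_mk, Module.mem_annihilator.mp hr,
        LocalizedModule.zero_mk]
  have under_eq : P.under R = Q.under R := h _ _ inferInstance inferInstance annihilator_le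
    (Ideal.comap_mono hPQ) (IsLocalization.disjoint_under_iff S _ Q |>.mpr hQ.ne_top)
  rw [← IsLocalization.map_under S _ P, under_eq, IsLocalization.map_under S _ Q]
  exact hQ

theorem localizedLength_quotient_range_comp {L : Type*} [AddCommGroup L] [Module R L]
    (f : L →ₗ[R] M) {g : M →ₗ[R] N} (hg : Function.Injective g) :
    localizedLength S (N ⧸ (g ∘ₗ f).range) =
      localizedLength S (M ⧸ f.range) + localizedLength S (N ⧸ g.range) := by
  have hle : f.range ≤ (g ∘ₗ f).range.comap g := by
    rw [LinearMap.range_comp]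
    exact Submodule.le_comap_map _ _
  refine localizedLength_eq_add_of_exact (f := Submodule.mapQ _ _ g hle)
    (g := Submodule.factor (LinearMap.range_comp_le_range f g)) ?_
    (Submodule.factor_surjective _) ?_
  · rw [← LinearMap.ker_eq_bot, Submodule.ker_mapQ, LinearMap.range_comp,
      Submodule.comap_map_eq_of_injective hg, Submodule.mkQ_map_self]
  · rw [LinearMap.exact_iff, Submodule.range_mapQ]
    exact (Submodule.ker_mapQ _ _ _ _).trans (by rw [Submodule.comap_id])

-- Compute the colength of `f ∘ a = b ∘ f` in two ways.
theorem localizedLength_quotient_range_eq {f : M →ₗ[R] N} {a : M →ₗ[R] M} {b : N →ₗ[R] N}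
    (hf : Function.Injective f) (hb : Function.Injective b) (hab : f ∘ₗ a = b ∘ₗ f)
    (hN : localizedLength S (N ⧸ f.range) ≠ ⊤) :
    localizedLength S (N ⧸ b.range) = localizedLength S (M ⧸ a.range) := by
  have colength_eq := localizedLength_quotient_range_comp (S := S) a hf
  rw [hab, localizedLength_quotient_range_comp f hb, add_comm] at colength_eq
  exact (ENat.add_left_injective_of_ne_top hN) colength_eq

theorem localizedLength_eq_add_of_le {P Q : Submodule R M} (hPQ : P ≤ Q) :
    localizedLength S Q = localizedLength S P + localizedLength S (Q ⧸ P.submoduleOf Q) :=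
  localizedLength_eq_add_of_exact (Submodule.inclusion_injective hPQ) (Submodule.mkQ_surjective _)
    (LinearMap.exact_iff.mpr (by rw [Submodule.ker_mkQ, Submodule.range_inclusion]; rfl))

theorem exists_fg_forall_smul_mem_of_localizedLength_le {b : ℕ∞} (hb : b ≠ ⊤)
    (h : ∀ T : Submodule R M, T.FG → localizedLength S T ≤ b) :
    ∃ G : Submodule R M, G.FG ∧ ∀ m, ∃ s ∈ S, s • m ∈ G := by
  lift b to ℕ using hb
  have finite_lengths : ((fun T : Submodule R M ↦ localizedLength S T) '' {T | T.FG}).Finite := by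
    refine ((Set.finite_Iic b).image (Nat.cast : ℕ → ℕ∞)).subset ?_
    rintro _ ⟨T, hT, rfl⟩
    obtain ⟨n, hn, hnb⟩ := ENat.le_natCast_iff.mp (h T hT)
    exact ⟨n, hnb, hn.symm⟩
  obtain ⟨G, hG, hmax⟩ := Set.Finite.exists_maximalFor' _ _ finite_lengths ⟨⊥, Submodule.fg_bot⟩
  refine ⟨G, hG, fun m ↦ ?_⟩
  have length_sup := localizedLength_eq_add_of_le (S := S) (le_sup_left : G ≤ G ⊔ R ∙ m)
  have length_sup_le : localizedLength S ↥(G ⊔ R ∙ m) ≤ localizedLength S G :=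
    hmax (hG.sup (Submodule.fg_span_singleton m)) (le_self_add.trans_eq length_sup.symm)
  have quotient_eq_zero :
      localizedLength S (↥(G ⊔ R ∙ m) ⧸ G.submoduleOf (G ⊔ R ∙ m)) = 0 := by
    have hG_ne_top := ((h G hG).trans_lt (ENat.natCast_lt_top b)).ne
    refine (ENat.add_right_injective_of_ne_top hG_ne_top) (?_ : _ + _ = _ + _)
    rw [← length_sup, add_zero]
    exact length_sup_le.antisymm (le_self_add.trans_eq length_sup.symm)
  obtain ⟨s, hs, hsm⟩ := localizedLength_eq_zero_iff.mp quotient_eq_zero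
    (Submodule.Quotient.mk ⟨m, Submodule.mem_sup_right (Submodule.mem_span_singleton_self m)⟩)
  rw [← Submodule.Quotient.mk_smul, Submodule.Quotient.mk_eq_zero] at hsm
  exact ⟨s, hs, hsm⟩

theorem exists_fg_map_eq_of_surjective {f : M →ₗ[R] N} (hf : Function.Surjective f)
    {T : Submodule R N} (hT : T.FG) : ∃ T' : Submodule R M, T'.FG ∧ T'.map f = T := by
  obtain ⟨n, g, rfl⟩ := (Submodule.fg_iff_exists_fin_linearMap R N).mp hT
  obtain ⟨g', rfl⟩ := Module.projective_lifting_property f g hf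
  exact ⟨g'.range, Submodule.fg_range g', (LinearMap.range_comp g' f).symm⟩

open scoped Pointwise in
theorem localizedLength_map_mkQ_le {x : R} (hx : IsSMulRegular M x) {F T : Submodule R M}
    (hFT : F ≤ T) (hT : localizedLength S (T ⧸ F.submoduleOf T) ≠ ⊤) :
    localizedLength S (T.map (x • (⊤ : Submodule R M)).mkQ) ≤
      localizedLength S (F ⧸ (LinearMap.lsmul R F x).range) := by
  rw [← localizedLength_quotient_range_eq (f := Submodule.inclusion hFT)
    (b := LinearMap.lsmul R T x) (Submodule.inclusion_injective hFT) (hx.submodule T x) rfl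
    (by rwa [Submodule.range_inclusion])]
  have range_le_ker : (LinearMap.lsmul R T x).range ≤
      ((x • (⊤ : Submodule R M)).mkQ.submoduleMap T).ker := by
    rintro _ ⟨t, rfl⟩
    rw [LinearMap.mem_ker, ← Submodule.coe_eq_zero]
    exact (Submodule.Quotient.mk_eq_zero _).mpr (Submodule.smul_mem_pointwise_smul _ x ⊤ trivial)
  refine localizedLength_le_of_surjective (f := Submodule.liftQ _ _ range_le_ker) ?_
  rw [← LinearMap.range_eq_top, Submodule.range_liftQ, LinearMap.range_eq_top]
  exact LinearMap.submoduleMap_surjective _ T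

theorem exists_fg_forall_smul_mem_quotSMulTop {x : R} (hx : IsSMulRegular M x)
    {F : Submodule R M} (hF : F.FG)
    (hFx : localizedLength S (F ⧸ (LinearMap.lsmul R F x).range) ≠ ⊤)
    (hFT : ∀ T : Submodule R M, T.FG → F ≤ T → localizedLength S (T ⧸ F.submoduleOf T) ≠ ⊤) :
    ∃ G : Submodule R (QuotSMulTop x M), G.FG ∧ ∀ m, ∃ s ∈ S, s • m ∈ G := by
  refine exists_fg_forall_smul_mem_of_localizedLength_le hFx fun T hT ↦ ?_
  obtain ⟨T', hT', rfl⟩ := exists_fg_map_eq_of_surjective (Submodule.mkQ_surjective _) hT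
  refine le_trans (localizedLength_le_of_injective
    (Submodule.inclusion_injective (Submodule.map_mono (le_sup_left : T' ≤ T' ⊔ F)))) ?_
  exact localizedLength_map_mkQ_le hx le_sup_right (hFT _ (hT'.sup hF) le_sup_right)

theorem exists_mem_forall_smul_mem_of_fg {F T : Submodule R M} {D : Submonoid R}
    (hF : ∀ m, ∃ d ∈ D, d • m ∈ F) (hT : T.FG) : ∃ d ∈ D, ∀ t ∈ T, d • t ∈ F := by
  induction T, hT using Submodule.fg_induction with
  | singleton m =>
    obtain ⟨d, hd, hdm⟩ := hF m
    refine ⟨d, hd, fun t ht ↦ ?_⟩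
    obtain ⟨r, rfl⟩ := Submodule.mem_span_singleton.mp ht
    exact smul_comm r d m ▸ F.smul_mem r hdm
  | sup T₁ T₂ _ _ ih₁ ih₂ =>
    obtain ⟨d₁, hd₁, h₁⟩ := ih₁
    obtain ⟨d₂, hd₂, h₂⟩ := ih₂
    refine ⟨d₁ * d₂, D.mul_mem hd₁ hd₂, fun t ht ↦ ?_⟩
    obtain ⟨t₁, ht₁, t₂, ht₂, rfl⟩ := Submodule.mem_sup.mp ht
    rw [smul_add]
    refine F.add_mem ?_ ?_
    · exact mul_comm d₁ d₂ ▸ mul_smul d₂ d₁ t₁ ▸ F.smul_mem d₂ (h₁ t₁ ht₁)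
    · exact mul_smul d₁ d₂ t₂ ▸ F.smul_mem d₁ (h₂ t₂ ht₂)

/-- The Krull–Akizuki theorem up to `S`-torsion. -/
theorem exists_fg_forall_smul_mem_quotSMulTop_of_denominators [IsNoetherianRing R] {D : Submonoid R}
    {x : R} (hxD : x ∈ D) (hx : IsSMulRegular M x) {F : Submodule R M} (hF : F.FG)
    (hden : ∀ m, ∃ d ∈ D, d • m ∈ F)
    (hprime : ∀ d ∈ D, ∀ p q : Ideal R, p.IsPrime → q.IsPrime → Module.annihilator R M ≤ p →
      d ∈ p → p ≤ q → Disjoint (S : Set R) q → p = q) :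
    ∃ G : Submodule R (QuotSMulTop x M), G.FG ∧ ∀ m, ∃ s ∈ S, s • m ∈ G := by
  have length_ne_top (d : R) (hd : d ∈ D) (T : Submodule R M) (hT : T.FG) (P : Submodule R T)
      (hP : ∀ t : T, d • t ∈ P) : localizedLength S (T ⧸ P) ≠ ⊤ := by
    have := Module.Finite.iff_fg.mpr hT
    refine localizedLength_ne_top fun p q hp hq hpann ↦ hprime d hd p q hp hq
      (le_trans ?_ hpann) (hpann <| Module.mem_annihilator.mpr fun t ↦ ?_)
    · exact (T.subtype.annihilator_le_of_injective T.injective_subtype).trans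
        (P.mkQ.annihilator_le_of_surjective P.mkQ_surjective)
    · obtain ⟨t, rfl⟩ := P.mkQ_surjective t
      exact (Submodule.Quotient.mk_eq_zero P).mpr (hP t)
  refine exists_fg_forall_smul_mem_quotSMulTop hx hF
    (length_ne_top x hxD F hF _ fun t ↦ ⟨t, rfl⟩) fun T hT _ ↦ ?_
  obtain ⟨d, hd, hdT⟩ := exists_mem_forall_smul_mem_of_fg hden hT
  exact length_ne_top d hd T hT _ fun t ↦ hdT t t.2

end KrullAkizuki

section FiniteModulo

open RingTheory.Sequence

variable {R : Type u} [CommRing R] [IsLocalRing R] {M : Type v} [AddCommGroup M] [Module R M]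

theorem eq_of_le_of_mem_nonZeroDivisors (hdim : ringKrullDim R = 2) {c : R}
    (hc : c ∈ nonZeroDivisors R) {p q : Ideal R} [p.IsPrime] [q.IsPrime] (hcp : c ∈ p)
    (hpq : p ≤ q) (hq : q ≠ maximalIdeal R) : p = q := by
  by_contra hne
  obtain ⟨p₀, hp₀, hp₀p⟩ := Ideal.exists_minimalPrimes_le (bot_le : ⊥ ≤ p)
  have := hp₀.1.1
  have p₀_ne : p₀ ≠ p := by
    rintro rfl
    exact Set.disjoint_left.mp (Ideal.disjoint_nonZeroDivisors_of_mem_minimalPrimes hp₀) hcp hc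
  have height_maximalIdeal : (maximalIdeal R).height = 2 :=
    WithBot.coe_injective (maximalIdeal_height_eq_ringKrullDim.trans hdim)
  have three_le_two : (3 : ℕ∞) ≤ 2 :=
    calc (3 : ℕ∞) = 0 + 1 + 1 + 1 := by norm_num
      _ ≤ p₀.height + 1 + 1 + 1 := by gcongr; exact zero_le
      _ ≤ p.height + 1 + 1 := by
        gcongr; exact Ideal.height_add_one_le_of_lt_of_isPrime (hp₀p.lt_of_ne p₀_ne)
      _ ≤ q.height + 1 := by
        gcongr; exact Ideal.height_add_one_le_of_lt_of_isPrime (hpq.lt_of_ne hne)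
      _ ≤ (maximalIdeal R).height := Ideal.height_add_one_le_of_lt_of_isPrime
        ((le_maximalIdeal Ideal.IsPrime.ne_top').lt_of_ne hq)
      _ = 2 := height_maximalIdeal
  exact absurd three_le_two (by norm_num)

variable [IsNoetherianRing R]

theorem eq_of_annihilator_quotSMulTop_le {x w : R} (hxw : IsRegular R [x, w])
    (hdim : ringKrullDim R = 2) {p q : Ideal R} (hp : p.IsPrime) (hq : q ≠ ⊤) (hpq : p ≤ q)
    (hann : Module.annihilator R (QuotSMulTop x M) ≤ p) (hwp : w ∈ p) : p = q := by
  have hxp : x ∈ p := hann <| Module.mem_annihilator.mpr fun z ↦ by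
    obtain ⟨m, rfl⟩ := Submodule.Quotient.mk_surjective _ z
    exact (Submodule.Quotient.mk_eq_zero _).mpr (Submodule.smul_mem_pointwise_smul m x ⊤ trivial)
  obtain ⟨k, hk⟩ := exists_maximalIdeal_pow_le_ofList hxw (hdim.trans (by norm_num))
  have ofList_le : Ideal.ofList [x, w] ≤ p := Ideal.span_le.mpr fun r hr ↦ by
    rcases List.mem_pair.mp hr with rfl | rfl <;> assumption
  exact le_antisymm hpq ((le_maximalIdeal hq).trans (hp.le_of_pow_le (hk.trans ofList_le)))

-- Krull–Akizuki is applied twice: first away from the closed subset `w = 0`, where nonzerodivisors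
-- have Artinian quotients, and then to `M / xM`, whose denominators have become powers of `w`.
theorem finite_quotSMulTop_quotSMulTop {x w : R} (hxw : IsRegular R [x, w])
    (hdim : ringKrullDim R = 2) (hM : IsWeaklyRegular M [x, w]) {F : Submodule R M} (hF : F.FG)
    (hden : ∀ m, ∃ c ∈ nonZeroDivisors R, c • m ∈ F) :
    Module.Finite R (QuotSMulTop w (QuotSMulTop x M)) := by
  have hx : x ∈ nonZeroDivisors R := mem_nonZeroDivisors_of_isWeaklyRegular_cons hxw.1
  have hw : w ∈ maximalIdeal R := mem_maximalIdeal_of_isRegular hxw w (by simp)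
  rw [isWeaklyRegular_cons_iff, isWeaklyRegular_singleton_iff] at hM
  obtain ⟨G, hG, hGw⟩ := exists_fg_forall_smul_mem_quotSMulTop_of_denominators
    (S := Submonoid.powers w) hx hM.1 hF hden fun c hc p q hp hq _ hcp hpq hwq ↦
      eq_of_le_of_mem_nonZeroDivisors hdim hc hcp hpq fun h ↦
        Set.disjoint_left.mp hwq (Submonoid.mem_powers w) (h ▸ hw)
  obtain ⟨T, hT, hT_top⟩ := exists_fg_forall_smul_mem_quotSMulTop_of_denominators
    (S := ⊥) (Submonoid.mem_powers w) hM.2 hG hGw <| by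
      rintro _ ⟨n, rfl⟩ p q hp hq hann hwp hpq -
      exact eq_of_annihilator_quotSMulTop_le hxw hdim hp hq.ne_top hpq hann
        (hp.mem_of_pow_mem n hwp)
  refine ⟨(Submodule.eq_top_iff'.mpr fun z ↦ ?_ : T = ⊤) ▸ hT⟩
  obtain ⟨_, rfl, hz⟩ := hT_top z
  rwa [one_smul] at hz

theorem exists_fg_sup_smul_top_eq_top {R : Type u} [CommRing R] {M : Type v} [AddCommGroup M]
    [Module R M] {I : Ideal R} {x w : R} (hx : x ∈ I) (hw : w ∈ I)
    [Module.Finite R (QuotSMulTop w (QuotSMulTop x M))] :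
    ∃ N : Submodule R M, N.FG ∧ N ⊔ I • ⊤ = ⊤ := by
  let f : M →ₗ[R] QuotSMulTop w (QuotSMulTop x M) := Submodule.mkQ _ ∘ₗ Submodule.mkQ _
  have hf : Function.Surjective f := (Submodule.mkQ_surjective _).comp (Submodule.mkQ_surjective _)
  have ker_le : f.ker ≤ I • ⊤ := fun m hm ↦ by
    obtain ⟨z, -, hz⟩ := (Submodule.Quotient.mk_eq_zero _).mp (LinearMap.mem_ker.mp hm)
    obtain ⟨m', rfl⟩ := Submodule.mkQ_surjective _ z
    obtain ⟨m'', -, hm''⟩ := (Submodule.Quotient.eq _).mp hz.symm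
    rw [← sub_add_cancel m (w • m')]
    exact Submodule.add_mem _ (hm'' ▸ Submodule.smul_mem_smul hx trivial)
      (Submodule.smul_mem_smul hw trivial)
  obtain ⟨N, hN, hNf⟩ := exists_fg_map_eq_of_surjective hf Module.Finite.fg_top
  rw [LinearMap.map_eq_top_iff (LinearMap.range_eq_top.mpr hf)] at hNf
  exact ⟨N, hN, top_le_iff.mp (hNf.ge.trans (sup_le_sup_left ker_le N))⟩

end FiniteModulo

section FinitenessByCompletion

open TensorProduct

theorem isPrecomplete_fin_fun {A : Type u} [CommRing A] (I : Ideal A) [IsPrecomplete I A] (n : ℕ) :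
    IsPrecomplete I (Fin n → A) := by
  refine AdicCompletion.of_surjective_iff.mp fun y ↦ ?_
  choose a ha using fun j ↦ AdicCompletion.of_surjective I A (AdicCompletion.piEquivFin I n y j)
  refine ⟨a, (AdicCompletion.piEquivFin I n).injective (funext fun j ↦ ?_)⟩
  rw [← ha, AdicCompletion.piEquivFin_apply]
  exact AdicCompletion.map_of I _ _

theorem finite_of_fg_sup_smul_top_eq_top {A : Type u} {U : Type v} [CommRing A] [AddCommGroup U]
    [Module A U] (I : Ideal A) [IsPrecomplete I A] [IsHausdorff I U] {N : Submodule A U}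
    (hN : N.FG) (hsup : N ⊔ I • ⊤ = ⊤) : Module.Finite A U := by
  obtain ⟨n, f, rfl⟩ := (Submodule.fg_iff_exists_fin_linearMap A U).mp hN
  have := isPrecomplete_fin_fun I n
  refine Module.Finite.of_surjective f (surjective_of_mkQ_comp_surjective (I := I) ?_)
  rwa [← LinearMap.range_eq_top, LinearMap.range_comp, LinearMap.map_eq_top_iff
    (Submodule.range_mkQ _), Submodule.ker_mkQ]

variable {R : Type u} {A : Type v} [CommRing R] [CommRing A] [Algebra R A]

theorem baseChange_sup_map_smul_top_eq_top {M : Type w} [AddCommGroup M] [Module R M] {I : Ideal R}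
    {N : Submodule R M} (hN : N ⊔ I • ⊤ = ⊤) :
    N.baseChange A ⊔ I.map (algebraMap R A) • ⊤ = ⊤ := by
  refine Submodule.eq_top_iff'.mpr fun u ↦ ?_
  induction u with
  | zero => exact zero_mem _
  | add u v hu hv => exact add_mem hu hv
  | tmul a m =>
    obtain ⟨n, hn, z, hz, rfl⟩ : ∃ n ∈ N, ∃ z ∈ I • (⊤ : Submodule R M), n + z = m :=
      Submodule.mem_sup.mp (by rw [hN]; trivial)
    rw [tmul_add]
    refine Submodule.add_mem_sup (Submodule.tmul_mem_baseChange_of_mem a hn) ?_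
    induction hz using Submodule.smul_induction_on' with
    | smul r hr m _ =>
      rw [tmul_smul, ← algebraMap_smul A r (a ⊗ₜ[R] m)]
      exact Submodule.smul_mem_smul (Ideal.mem_map_of_mem _ hr) trivial
    | add y _ z _ hy hz =>
      rw [tmul_add]
      exact add_mem hy hz

theorem exists_smul_eq_algebraMap_tensorProduct {B : Type w} [CommRing B] [Algebra R B]
    {D : Submonoid R} (hden : ∀ b : B, ∃ c ∈ D, ∃ r : R, c • b = algebraMap R B r)
    (u : A ⊗[R] B) : ∃ c ∈ D, ∃ a : A, c • u = algebraMap A (A ⊗[R] B) a := by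
  induction u with
  | zero => exact ⟨1, one_mem _, 0, by simp⟩
  | tmul a b =>
    obtain ⟨c, hc, r, hr⟩ := hden b
    exact ⟨c, hc, r • a, by
      rw [← tmul_smul, hr, Algebra.algebraMap_eq_smul_one, tmul_smul, smul_tmul']; rfl⟩
  | add u v hu hv =>
    obtain ⟨c, hc, a, ha⟩ := hu
    obtain ⟨d, hd, b, hb⟩ := hv
    refine ⟨c * d, mul_mem hc hd, d • a + c • b, ?_⟩
    rw [Algebra.algebraMap_eq_smul_one, add_smul, smul_assoc, smul_assoc,
      ← Algebra.algebraMap_eq_smul_one, ← Algebra.algebraMap_eq_smul_one, ← ha, ← hb, smul_add,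
      mul_smul, mul_smul, smul_comm c d u]

variable [IsLocalRing A] [IsNoetherianRing A] [IsReduced A] {B : Type w} [CommRing B] [Algebra R B]
  [Algebra.IsIntegral R B]

theorem isHausdorff_maximalIdeal_tensorProduct [Module.Flat R A]
    (hinj : Function.Injective (algebraMap R B))
    (hden : ∀ b : B, ∃ c ∈ nonZeroDivisors R, ∃ r : R, c • b = algebraMap R B r)
    (htf : ∀ c ∈ nonZeroDivisors R, IsSMulRegular B c) :
    IsHausdorff (maximalIdeal A) (A ⊗[R] B) := by
  refine isHausdorff_maximalIdeal_of_isIntegral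
    (Algebra.TensorProduct.includeLeft_injective (S := R) hinj) fun u ↦ ?_
  obtain ⟨c, hc, a, hca⟩ := exists_smul_eq_algebraMap_tensorProduct hden u
  refine ⟨algebraMap R A c, ?_, a, by rw [algebraMap_smul, hca]⟩
  rw [isSMulRegular_algebraMap_iff]
  exact (htf c hc).lTensor A

theorem finite_of_finite_modulo_maximalIdeal [IsLocalRing R] [IsPrecomplete (maximalIdeal A) A]
    [Module.FaithfullyFlat R A]
    (hmax : (maximalIdeal R).map (algebraMap R A) = maximalIdeal A)
    (hinj : Function.Injective (algebraMap R B))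
    (hden : ∀ b : B, ∃ c ∈ nonZeroDivisors R, ∃ r : R, c • b = algebraMap R B r)
    (htf : ∀ c ∈ nonZeroDivisors R, IsSMulRegular B c) {N : Submodule R B} (hN : N.FG)
    (hsup : N ⊔ maximalIdeal R • ⊤ = ⊤) : Module.Finite R B := by
  have := isHausdorff_maximalIdeal_tensorProduct (A := A) hinj hden htf
  have baseChange_fg : (N.baseChange A).FG := by
    obtain ⟨s, rfl⟩ := hN
    rw [Submodule.baseChange_span]
    exact Submodule.fg_span (s.finite_toSet.image _)
  have : Module.Finite A (A ⊗[R] B) := finite_of_fg_sup_smul_top_eq_top (maximalIdeal A)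
    baseChange_fg (hmax ▸ baseChange_sup_map_smul_top_eq_top hsup)
  exact Module.Finite.of_finite_tensorProduct_of_faithfullyFlat A

end FinitenessByCompletion

section BirationalExtension

variable {R : Type u} {K : Type v} [CommRing R] [CommRing K] [Algebra R K] [IsFractionRing R K]

variable (K) in
theorem isSMulRegular_of_mem_nonZeroDivisors {c : R} (hc : c ∈ nonZeroDivisors R) :
    IsSMulRegular K c := by
  rw [← isSMulRegular_algebraMap_iff (A := K)]
  exact (IsLocalization.map_units K ⟨c, hc⟩).isSMulRegular K

variable (B : Subalgebra R K)

theorem algebraMap_subalgebra_injective : Function.Injective (algebraMap R B) := fun _ _ h ↦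
  IsFractionRing.injective R K (congrArg Subtype.val h)

theorem isSMulRegular_subalgebra {c : R} (hc : c ∈ nonZeroDivisors R) : IsSMulRegular B c :=
  (isSMulRegular_of_mem_nonZeroDivisors K hc).of_injective B.val.toLinearMap Subtype.val_injective

theorem exists_smul_eq_algebraMap_subalgebra (b : B) :
    ∃ c ∈ nonZeroDivisors R, ∃ r : R, c • b = algebraMap R B r := by
  obtain ⟨⟨r, c⟩, h⟩ := IsLocalization.surj (nonZeroDivisors R) b.1
  exact ⟨c, c.2, r, Subtype.ext ((Algebra.smul_def _ _).trans ((mul_comm _ _).trans h))⟩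

theorem algebraMap_linearMap_apply (ψ : B →ₗ[R] R) (b : B) :
    algebraMap R B (ψ b) = ψ 1 • b := by
  obtain ⟨c, hc, r, h⟩ := exists_smul_eq_algebraMap_subalgebra B b
  have smul_apply_eq : c • ψ b = ψ 1 • r := by
    rw [← map_smul, h, Algebra.algebraMap_eq_smul_one, map_smul, smul_eq_mul, smul_eq_mul, mul_comm]
  refine isSMulRegular_subalgebra B hc ?_
  dsimp only
  rw [← algebraMap.coe_smul, smul_apply_eq, smul_comm, h, algebraMap.coe_smul]

theorem subsingleton_linearMap_quotient_range :
    Subsingleton ((B ⧸ LinearMap.range (Algebra.linearMap R B)) →ₗ[R] R) := by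
  refine subsingleton_of_forall_eq 0 fun f ↦ Submodule.linearMap_qext _ (LinearMap.ext fun b ↦ ?_)
  obtain ⟨c, hc, r, h⟩ := exists_smul_eq_algebraMap_subalgebra B b
  have smul_mkQ_eq_zero : c • Submodule.mkQ (LinearMap.range (Algebra.linearMap R B)) b = 0 := by
    rw [← map_smul, h]
    exact (Submodule.Quotient.mk_eq_zero _).mpr ⟨r, rfl⟩
  refine (mem_nonZeroDivisors_iff_left.mp hc) _ ?_
  rw [← smul_eq_mul, LinearMap.comp_apply, ← map_smul, smul_mkQ_eq_zero, map_zero]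

end BirationalExtension

section ExtOne

theorem annihilator_le_annihilator_ext {R : Type u} [CommRing R] (X Y : ModuleCat.{v} R)
    [HasExt.{w} (ModuleCat.{v} R)] (i : ℕ) :
    Module.annihilator R X ≤ Module.annihilator R (Abelian.Ext X Y i) := by
  intro r hr
  rw [Module.mem_annihilator] at hr ⊢
  intro e
  have smul_id_eq_zero : r • 𝟙 X = 0 := ModuleCat.hom_ext (LinearMap.ext hr)
  rw [← Abelian.Ext.mk₀_id_comp e, ← Abelian.Ext.smul_comp, ← Abelian.Ext.mk₀_smul,
    smul_id_eq_zero, Abelian.Ext.mk₀_zero, Abelian.Ext.zero_comp]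

theorem exists_linearMap_comp_eq_smul {R : Type u} [CommRing R] {M' M N : Type u}
    [AddCommGroup M'] [Module R M'] [AddCommGroup M] [Module R M] [AddCommGroup N] [Module R N]
    {f : M' →ₗ[R] M} (hf : Function.Injective f) {r : R}
    (hr : r ∈ Module.annihilator R
      (Abelian.Ext (ModuleCat.of R (M ⧸ LinearMap.range f)) (ModuleCat.of R N) 1))
    (φ : M' →ₗ[R] N) : ∃ ψ : M →ₗ[R] N, ψ ∘ₗ f = r • φ := by
  obtain ⟨e, he⟩ := Abelian.Ext.contravariant_sequence_exact₁ (shortExact_linearMap_mkQ hf)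
    (ModuleCat.of R N) (r • Abelian.Ext.mk₀ (ModuleCat.ofHom φ)) (add_zero 1) (by
      rw [Abelian.Ext.comp_smul]; exact Module.mem_annihilator.mp hr _)
  obtain ⟨ψ, rfl⟩ := (Abelian.Ext.mk₀_bijective _ _).2 e
  rw [← Abelian.Ext.mk₀_smul, Abelian.Ext.mk₀_comp_mk₀] at he
  exact ⟨ψ.hom, congrArg ModuleCat.Hom.hom ((Abelian.Ext.mk₀_bijective _ _).1 he)⟩

theorem annihilator_ext_one_quotient_range {R K : Type u} [CommRing R] [CommRing K] [Algebra R K]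
    [IsFractionRing R K] (B : Subalgebra R K) :
    Module.annihilator R (Abelian.Ext
        (ModuleCat.of R (B ⧸ LinearMap.range (Algebra.linearMap R B))) (ModuleCat.of R R) 1) =
      Module.annihilator R (B ⧸ LinearMap.range (Algebra.linearMap R B)) := by
  refine le_antisymm (fun r hr ↦ ?_) (annihilator_le_annihilator_ext (ModuleCat.of R _) _ 1)
  obtain ⟨ψ, hψ⟩ := exists_linearMap_comp_eq_smul (f := Algebra.linearMap R B)
    (algebraMap_subalgebra_injective B) hr LinearMap.id
  have apply_one : ψ 1 = r := by simpa using LinearMap.congr_fun hψ 1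
  refine Module.mem_annihilator.mpr fun z ↦ ?_
  obtain ⟨b, rfl⟩ := Submodule.mkQ_surjective _ z
  exact (Submodule.Quotient.mk_eq_zero _).mpr
    ⟨ψ b, by rw [← apply_one]; exact algebraMap_linearMap_apply B ψ b⟩

end ExtOne

section IntegralClosure

open RingTheory.Sequence

variable {R : Type u} [CommRing R] [IsLocalRing R] [IsNoetherianRing R]

theorem isReduced_of_isReduced_adicCompletion [IsReduced (AdicCompletion (maximalIdeal R) R)] :
    IsReduced R :=
  have : Module.FaithfullyFlat R (AdicCompletion (maximalIdeal R) R) :=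
    Module.FaithfullyFlat.of_flat_of_isLocalHom
  isReduced_of_injective (algebraMap R (AdicCompletion (maximalIdeal R) R))
    (FaithfulSMul.algebraMap_injective _ _)

theorem isWeaklyRegular_integralClosure {R : Type u} [CommRing R] [IsNoetherianRing R]
    (K : Type v) [CommRing K] [Algebra R K] [IsFractionRing R K] {x w : R}
    (hxw : IsWeaklyRegular R [x, w]) : IsWeaklyRegular (integralClosure R K) [x, w] := by
  have hx : x ∈ nonZeroDivisors R := mem_nonZeroDivisors_of_isWeaklyRegular_cons hxw
  rw [isWeaklyRegular_cons_iff, isWeaklyRegular_singleton_iff] at hxw ⊢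
  refine ⟨isSMulRegular_subalgebra _ hx,
    (isSMulRegular_quotient_iff_mem_of_smul_mem _ _).mpr fun b ↦ ?_⟩
  rintro ⟨b', -, hb'⟩
  obtain ⟨z, hz⟩ : ∃ z : K, x • z = b := by
    obtain ⟨v, hv⟩ := (IsLocalization.map_units K (⟨x, hx⟩ : nonZeroDivisors R)).exists_right_inv
    exact ⟨v * b, by rw [Algebra.smul_def, ← mul_assoc, hv, one_mul]⟩
  have smul_eq : w • z = b' := by
    refine isSMulRegular_of_mem_nonZeroDivisors K hx ?_
    dsimp only
    rw [smul_comm, hz]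
    exact (congrArg Subtype.val hb').symm
  have hzint : IsIntegral R z := isIntegral_of_isIntegral_smul hx hxw.2 (hz ▸ b.2) (smul_eq ▸ b'.2)
  exact ⟨⟨z, hzint⟩, trivial, Subtype.ext hz⟩

theorem finite_integralClosure [IsReduced (AdicCompletion (maximalIdeal R) R)] (K : Type v)
    [CommRing K] [Algebra R K] [IsFractionRing R K] (hdim : ringKrullDim R = 2) {x w : R}
    (hxw : IsRegular R [x, w]) : Module.Finite R (integralClosure R K) := by
  have denominators (b : integralClosure R K) : ∃ c ∈ nonZeroDivisors R, ∃ r : R,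
      c • b = algebraMap R (integralClosure R K) r := exists_smul_eq_algebraMap_subalgebra _ b
  have := finite_quotSMulTop_quotSMulTop hxw hdim
    (isWeaklyRegular_integralClosure K hxw.toIsWeaklyRegular)
    (Submodule.fg_span_singleton 1) fun b ↦ by
      obtain ⟨c, hc, r, h⟩ := denominators b
      exact ⟨c, hc, Submodule.mem_span_singleton.mpr
        ⟨r, by rw [h, Algebra.algebraMap_eq_smul_one]⟩⟩
  obtain ⟨N, hN, hsup⟩ := exists_fg_sup_smul_top_eq_top (M := integralClosure R K)
    (mem_maximalIdeal_of_isRegular hxw x (by simp)) (mem_maximalIdeal_of_isRegular hxw w (by simp))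
  have := isNoetherianRing_adicCompletion (maximalIdeal R)
  have : Module.FaithfullyFlat R (AdicCompletion (maximalIdeal R) R) :=
    Module.FaithfullyFlat.of_flat_of_isLocalHom
  exact finite_of_finite_modulo_maximalIdeal (A := AdicCompletion (maximalIdeal R) R)
    AdicCompletion.maximalIdeal_eq_map.symm (algebraMap_subalgebra_injective _) denominators
    (fun _ ↦ isSMulRegular_subalgebra _) hN hsup

theorem subsingleton_ext_two_quotient_range {K : Type u} [CommRing K] [Algebra R K]
    [IsFractionRing R K] (B : Subalgebra R K) [Module.Finite R B] {x : R}
    (hxm : x ∈ maximalIdeal R) (hx : x ∈ nonZeroDivisors R)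
    (hExt : ExtVanishesOnFinite (ModuleCat.of R R) 3) :
    Subsingleton (Abelian.Ext
      (ModuleCat.of R (B ⧸ LinearMap.range (Algebra.linearMap R B))) (ModuleCat.of R R) 2) := by
  have : Projective (ModuleCat.of R R) := ModuleCat.projective_of_categoryTheory_projective _
  refine subsingleton_ext_X₃ (shortExact_linearMap_mkQ (algebraMap_subalgebra_injective B))
    (subsingleton_of_forall_eq 0 fun e ↦ e.eq_zero_of_projective) ?_
  exact subsingleton_ext_of_quotSMulTop (M := ModuleCat.of R B) (N := ModuleCat.of R R)
    (maximalIdeal_le_jacobson ⊥ hxm) (isSMulRegular_subalgebra B hx)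
    (hExt _ (inferInstanceAs (Module.Finite R (QuotSMulTop x B))))

end IntegralClosure

section Gorenstein

theorem exists_extVanishesOnFinite {R : Type} [CommRing R] (hR : HasFiniteInjDim R R) (k : ℕ) :
    ∃ n, k ≤ n ∧ ExtVanishesOnFinite (ModuleCat.of R R) n := by
  obtain ⟨n, hn⟩ := hR
  refine ⟨n + k + 1, by omega, fun M _ ↦ ?_⟩
  rw [← Module.annihilator_eq_top_iff (R := R), ← annihilator_ext_succ,
    Module.annihilator_eq_top_iff]
  exact hn M _ (by omega)

end Gorenstein

-- STATEMENT 10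
theorem stmt10 (R : Type) [CommRing R] [IsLocalRing R]
    (hau : AnalyticallyUnramified R) (hgor : IsGorensteinLocal R)
    (hdim : ringKrullDim R = 2) :
    (∏ i ∈ Finset.range 3, Module.annihilator R (ExtMod R (IntClosureQuot R) R i)) =
      conductorIdeal R := by
  obtain ⟨_, hid⟩ := hgor
  have : IsReduced (AdicCompletion (maximalIdeal R) R) := hau
  have : IsReduced R := isReduced_of_isReduced_adicCompletion
  obtain ⟨n, hn, hExt⟩ := exists_extVanishesOnFinite hid 3
  obtain ⟨x, w, hxw⟩ := exists_isRegular_pair (by rw [hdim]; decide) (by omega) hExt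
  have : Module.Finite R (IntClosure R) := finite_integralClosure (FractionRing R) hdim hxw
  have ann_ext_zero : Module.annihilator R (ExtMod R (IntClosureQuot R) R 0) = ⊤ := by
    have := subsingleton_linearMap_quotient_range (integralClosure R (FractionRing R))
    have : Subsingleton (ModuleCat.of R (IntClosureQuot R) ⟶ ModuleCat.of R R) :=
      ModuleCat.homEquiv.subsingleton
    exact Module.annihilator_eq_top_iff.mpr subsingleton_ext_zero
  have ann_ext_one : Module.annihilator R (ExtMod R (IntClosureQuot R) R 1) = conductorIdeal R :=
    (annihilator_ext_succ _ _ 0).trans (annihilator_ext_one_quotient_range _)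
  have ann_ext_two : Module.annihilator R (ExtMod R (IntClosureQuot R) R 2) = ⊤ :=
    (annihilator_ext_succ _ _ 1).trans <| Module.annihilator_eq_top_iff.mpr <|
      subsingleton_ext_two_quotient_range _ (mem_maximalIdeal_of_isRegular hxw x (by simp))
        (mem_nonZeroDivisors_of_isWeaklyRegular_cons hxw.1)
        (extVanishesOnFinite_length_succ hxw hdim hn hExt)
  rw [Finset.prod_range_succ, Finset.prod_range_succ, Finset.prod_range_one, ann_ext_zero,
    ann_ext_one, ann_ext_two, Ideal.top_mul, Ideal.mul_top]
end
end

section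
/- Let (R, m) be an analytically unramified Cohen–Macaulay local ring of dimension d with integral closure R̄ and conductor ideal 𝔠, and let x_1, …, x_d be a system of parameters of R. Then 𝔠 annihilates Tor^R_i(R̄, R/(x_1, …, x_d)R) for every i > 0. -/
open CategoryTheory IsLocalRing

set_option synthInstance.maxHeartbeats 1000000
set_option maxHeartbeats 1000000

noncomputable section

/-!
Multiplication by `c ∈ 𝔠` maps `R̄` into `R`, hence factors as `R̄ → R → R̄`. Applying the
`R`-linear functor `Tor_i(-, N)` with `i > 0`, multiplication by `c` on `Tor_i(R̄, N)` factors
through `Tor_i(R, N)`, which vanishes because `R` is flat.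
-/

lemma exists_comp_eq_smul_id_of_mem_annihilator_quotient_range {R M N : Type*} [CommRing R]
    [AddCommGroup M] [Module R M] [AddCommGroup N] [Module R N] {f : M →ₗ[R] N}
    (hf : Function.Injective f) {a : R} (ha : a ∈ Module.annihilator R (N ⧸ LinearMap.range f)) :
    ∃ g : N →ₗ[R] M, f ∘ₗ g = a • LinearMap.id := by
  have smul_mem_range (y : N) : a • y ∈ LinearMap.range f := by
    rw [← Submodule.Quotient.mk_eq_zero, Submodule.Quotient.mk_smul]
    exact Module.mem_annihilator.mp ha _
  let e := LinearEquiv.ofInjective f hf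
  refine ⟨e.symm ∘ₗ (a • LinearMap.id : N →ₗ[R] N).codRestrict _ smul_mem_range, ?_⟩
  ext y
  exact congrArg Subtype.val (e.apply_symm_apply ⟨a • y, smul_mem_range y⟩)

section LinearCategory

open Limits

variable {S : Type*} [Semiring S]

lemma smul_id_obj_eq_zero_of_comp_eq_smul_id {C D : Type*} [Category* C] [Category* D]
    [Preadditive C] [Preadditive D] [Linear S C] [Linear S D] (F : C ⥤ D) [F.Linear S]
    {X Y : C} {f : X ⟶ Y} {g : Y ⟶ X} {a : S} (hfg : f ≫ g = a • 𝟙 X)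
    (hY : IsZero (F.obj Y)) : a • 𝟙 (F.obj X) = 0 :=
  calc a • 𝟙 (F.obj X)
    _ = F.map (a • 𝟙 X) := by rw [F.map_smul, F.map_id]
    _ = F.map f ≫ F.map g := by rw [← hfg, F.map_comp]
    _ = 0 := by rw [hY.eq_of_tgt (F.map f) 0, zero_comp]

instance homologicalComplex_homologyFunctor_linear {V ι : Type*} [Category* V] [Preadditive V]
    [Linear S V] [CategoryWithHomology V] (c : ComplexShape ι) (i : ι) :
    (HomologicalComplex.homologyFunctor V c i).Linear S where
  map_smul φ a :=
    ShortComplex.homologyMap_smul ((HomologicalComplex.shortComplexFunctor V c i).map φ) a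

end LinearCategory

section LeftDerived

open Limits

variable {C D : Type*} [Category* C] [Category* D] [Abelian C] [Abelian D]
  [HasProjectiveResolutions C]

lemma natTrans_leftDerived_app_smul {S : Type*} [Semiring S] [Linear S D] {F G : C ⥤ D}
    [F.Additive] [G.Additive] (a : S) (α : F ⟶ G) (n : ℕ) (X : C) :
    (NatTrans.leftDerived (a • α) n).app X = a • (NatTrans.leftDerived α n).app X := by
  let P := projectiveResolution X
  have map_smul : (NatTrans.mapHomologicalComplex (a • α) (ComplexShape.down ℕ)).app P.complex =
      a • (NatTrans.mapHomologicalComplex α _).app P.complex := rfl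
  rw [P.leftDerived_app_eq, P.leftDerived_app_eq, map_smul, Functor.map_smul,
    Linear.smul_comp, Linear.comp_smul]

lemma isZero_leftDerived_obj_succ_of_preservesHomology (F : C ⥤ D) [F.Additive]
    [F.PreservesHomology] (n : ℕ) (X : C) : IsZero ((F.leftDerived (n + 1)).obj X) := by
  let P := projectiveResolution X
  have exactAt : ((F.mapHomologicalComplex _).obj P.complex).ExactAt (n + 1) :=
    (P.complex_exactAt_succ n).map F
  exact exactAt.isZero_homology.of_iso (P.isoLeftDerivedObj F (n + 1))

end LeftDerived

section Tor

open Limits MonoidalCategory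

instance tor_flip_obj_linear {C : Type*} [Category* C] [MonoidalCategory C] [Abelian C]
    [MonoidalPreadditive C] [HasProjectiveResolutions C] {S : Type*} [Semiring S] [Linear S C]
    [MonoidalLinear S C] (n : ℕ) (Y : C) : ((Tor C n).flip.obj Y).Linear S where
  map_smul f a := by
    have tensoring_smul : (tensoringLeft C).map (a • f) = a • (tensoringLeft C).map f := by
      ext Z
      exact MonoidalLinear.smul_whiskerRight a f Z
    change (NatTrans.leftDerived ((tensoringLeft C).map (a • f)) n).app Y = _
    rw [tensoring_smul, natTrans_leftDerived_app_smul]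
    rfl

universe u

variable {R : Type u} [CommRing R]

lemma isZero_tor_succ_of_flat (M N : ModuleCat.{u} R) [Module.Flat R M] (n : ℕ) :
    IsZero (((Tor (ModuleCat.{u} R) (n + 1)).obj M).obj N) := by
  have : PreservesFiniteLimits ((tensoringLeft (ModuleCat.{u} R)).obj M) :=
    inferInstanceAs (PreservesFiniteLimits (tensorLeft M))
  have : PreservesFiniteColimits ((tensoringLeft (ModuleCat.{u} R)).obj M) :=
    inferInstanceAs (PreservesFiniteColimits (tensorLeft M))
  exact isZero_leftDerived_obj_succ_of_preservesHomology ((tensoringLeft _).obj M) n N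

lemma annihilator_quotient_range_le_annihilator_tor {M N : Type u} [AddCommGroup M] [Module R M]
    [Module.Flat R M] [AddCommGroup N] [Module R N] {f : M →ₗ[R] N} (hf : Function.Injective f)
    (Y : ModuleCat.{u} R) {i : ℕ} (hi : 0 < i) :
    Module.annihilator R (N ⧸ LinearMap.range f) ≤
      Module.annihilator R (((Tor (ModuleCat.{u} R) i).obj (ModuleCat.of R N)).obj Y) := by
  intro a ha
  obtain ⟨n, rfl⟩ := Nat.exists_eq_add_one_of_ne_zero hi.ne'
  obtain ⟨g, hg⟩ := exists_comp_eq_smul_id_of_mem_annihilator_quotient_range hf ha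
  have factorization : ModuleCat.ofHom g ≫ ModuleCat.ofHom f = a • 𝟙 (ModuleCat.of R N) :=
    ModuleCat.hom_ext hg
  have tor_smul_id : a • 𝟙 (((Tor (ModuleCat.{u} R) (n + 1)).flip.obj Y).obj (.of R N)) = 0 :=
    smul_id_obj_eq_zero_of_comp_eq_smul_id _ factorization
      (isZero_tor_succ_of_flat (.of R M) Y n)
  exact Module.mem_annihilator.mpr fun t ↦ congrArg (fun φ ↦ φ.hom t) tor_smul_id

end Tor

lemma algebraMap_intClosure_injective (R : Type) [CommRing R] :
    Function.Injective (algebraMap R (IntClosure R)) :=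
  have := FaithfulSMul.tower_bot R (IntClosure R) (FractionRing R)
  FaithfulSMul.algebraMap_injective R (IntClosure R)

theorem stmt13_general (R : Type) [CommRing R] (N : ModuleCat.{0} R) {i : ℕ} (hi : 0 < i) :
    conductorIdeal R ≤ Module.annihilator R
      (((Tor (ModuleCat.{0} R) i).obj (ModuleCat.of R (IntClosure R))).obj N) :=
  annihilator_quotient_range_le_annihilator_tor (algebraMap_intClosure_injective R) N hi

-- STATEMENT 13
theorem stmt13 (R : Type) [CommRing R] [IsLocalRing R] [IsNoetherianRing R]
    (hau : AnalyticallyUnramified R) (hcm : IsCohenMacaulayLocal R)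
    {d : ℕ} (x : Fin d → R) (hx : IsSystemOfParameters R x) :
    ∀ i : ℕ, 0 < i →
      conductorIdeal R ≤ Module.annihilator R
        ↥(((Tor (ModuleCat.{0} R) i).obj (ModuleCat.of R (IntClosure R))).obj
          (ModuleCat.of R (R ⧸ Ideal.span (Set.range x)))) :=
  fun _ hi ↦ stmt13_general R _ hi
end
end
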